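/- arXiv:0707.3598 — 7 statements merged into one kernel-verified Lean document; each statement's English description precedes it below -/
import Mathlib

section
/- Fix φ ∈ (−π/2, π/2). Then the function θ ↦ U(θ, φ) is strictly decreasing on the interval (0, π/(2l)) and strictly increasing on the interval (π/(2l), π/l). -/
open Real Finset

/-- The reduced dihedral potential on the shape sphere. -/
noncomputable def dihedralU (l : ℕ) (α : ℝ) (θ φ : ℝ) : ℝ :=
  (2 * Real.cos φ) ^ (-α) *
    ((∑ j ∈ Finset.Icc 1 (l - 1), Real.sin ((j : ℝ) * Real.pi / l) ^ (-α)) +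
      ∑ j ∈ Finset.Icc 1 l,
        (Real.sin ((j : ℝ) * Real.pi / l - θ) ^ 2 + Real.tan φ ^ 2) ^ (-α / 2))

lemma aux_geom (l : ℕ) (hl : 0 < l) (ζ z : ℂ) (hζ : IsPrimitiveRoot ζ l) (hz : ‖z‖ < 1) :
    ∑ j ∈ Finset.Icc 1 l, (1 - z * ζ ^ j)⁻¹ = l * (1 - z ^ l)⁻¹ := by
  have hzl : (1 - z ^ l) ≠ 0 := by
    intro h
    have h1 : ‖z ^ l‖ = 1 := by rw [← sub_eq_zero.1 h]; simp
    rw [norm_pow] at h1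
    have := pow_lt_one₀ (norm_nonneg z) hz hl.ne'
    linarith
  have key : ∀ j : ℕ, (1 - z * ζ ^ j)⁻¹
      = (∑ k ∈ Finset.range l, z ^ k * (ζ ^ k) ^ j) * (1 - z ^ l)⁻¹ := by
    intro j
    have h1 := mul_neg_geom_sum (z * ζ ^ j) l
    have h2 : (z * ζ ^ j) ^ l = z ^ l := by
      rw [mul_pow, ← pow_mul, mul_comm j l, pow_mul, hζ.pow_eq_one]; simp
    rw [h2] at h1
    have h3 : ∑ k ∈ Finset.range l, z ^ k * (ζ ^ k) ^ j = ∑ k ∈ Finset.range l, (z * ζ ^ j) ^ k := by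
      refine Finset.sum_congr rfl fun k _ => ?_
      rw [mul_pow, ← pow_mul, ← pow_mul, mul_comm j k]
    rw [h3]
    have h4 : 1 - z * ζ ^ j ≠ 0 := by
      intro h; rw [h, zero_mul] at h1; exact hzl h1.symm
    rw [← h1] at hzl ⊢
    have h5 := right_ne_zero_of_mul hzl
    field_simp
  rw [Finset.sum_congr rfl fun j _ => key j, ← Finset.sum_mul, Finset.sum_comm]
  congr 1
  have h6 : ∀ k ∈ Finset.range l, ∑ j ∈ Finset.Icc 1 l, z ^ k * (ζ ^ k) ^ j
      = if k = 0 then (l : ℂ) else 0 := by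
    intro k hk
    split_ifs with h
    · subst h; simp
    · rw [← Finset.mul_sum]
      have h7 : ∑ j ∈ Finset.Icc 1 l, (ζ ^ k) ^ j = ζ ^ k * ∑ j ∈ Finset.range l, (ζ ^ k) ^ j := by
        rw [Finset.mul_sum, Finset.range_eq_Ico, ← Finset.Ico_add_one_right_eq_Icc,
          ← Finset.sum_Ico_add' (fun j => (ζ ^ k) ^ j) 0 l 1]
        exact Finset.sum_congr rfl fun j _ => by rw [pow_succ, mul_comm]
      have h8 := mul_neg_geom_sum (ζ ^ k) l
      rw [← pow_mul, mul_comm k l, pow_mul, hζ.pow_eq_one, one_pow, sub_self] at h8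
      have h9 : 1 - ζ ^ k ≠ 0 := sub_ne_zero.2
        (hζ.pow_ne_one_of_pos_of_lt h (Finset.mem_range.1 hk)).symm
      rw [h7, (mul_eq_zero.1 h8).resolve_left h9]; simp
  rw [Finset.sum_congr rfl h6]
  simp [hl.ne']

/-- Poisson kernel as a real part. -/
lemma aux_poisson (r ψ : ℝ) (hr : 0 < r) (hr1 : r < 1) :
    (1 - r ^ 2) / (1 + r ^ 2 - 2 * r * Real.cos ψ)
      = 2 * ((1 - (r : ℂ) * Complex.exp (ψ * Complex.I))⁻¹).re - 1 := by
  have hns : Complex.normSq (1 - (r : ℂ) * Complex.exp (ψ * Complex.I))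
      = 1 + r ^ 2 - 2 * r * Real.cos ψ := by
    rw [Complex.normSq_apply]
    simp only [Complex.sub_re, Complex.sub_im, Complex.one_re, Complex.one_im,
      Complex.re_ofReal_mul, Complex.im_ofReal_mul, Complex.exp_ofReal_mul_I_re,
      Complex.exp_ofReal_mul_I_im]
    nlinarith [Real.sin_sq_add_cos_sq ψ]
  have hpos : 0 < 1 + r ^ 2 - 2 * r * Real.cos ψ := by
    nlinarith [Real.cos_le_one ψ]
  rw [Complex.inv_re, hns]
  simp only [Complex.sub_re, Complex.one_re,
      Complex.re_ofReal_mul, Complex.exp_ofReal_mul_I_re]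
  have hne := hpos.ne'
  generalize hD : 1 + r ^ 2 - 2 * r * Real.cos ψ = D at hne ⊢
  field_simp
  linarith

lemma aux_sum (l : ℕ) (hl : 0 < l) (r θ : ℝ) (hr : 0 < r) (hr1 : r < 1) :
    ∑ j ∈ Finset.Icc 1 l,
      (1 - r ^ 2) / (1 + r ^ 2 - 2 * r * Real.cos (2 * ((j : ℝ) * Real.pi / l - θ)))
      = l * ((1 - (r ^ l) ^ 2) / (1 + (r ^ l) ^ 2 - 2 * r ^ l * Real.cos (2 * l * θ))) := by
  have hl0 : (l : ℂ) ≠ 0 := by exact_mod_cast hl.ne'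
  have hζ := Complex.isPrimitiveRoot_exp l hl.ne'
  set z : ℂ := r * Complex.exp ((-(2 * θ) : ℝ) * Complex.I) with hz
  have hzn : ‖z‖ < 1 := by
    rw [hz, norm_mul, Complex.norm_exp_ofReal_mul_I]
    simpa [abs_of_pos hr] using hr1
  have h := congrArg Complex.re (aux_geom l hl _ z hζ hzn)
  have hterm : ∀ j : ℕ, z * Complex.exp (2 * Real.pi * Complex.I / l) ^ j
      = (r : ℂ) * Complex.exp (((2 * ((j : ℝ) * Real.pi / l - θ) : ℝ) : ℂ) * Complex.I) := by
    intro j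
    rw [hz, ← Complex.exp_nat_mul, mul_assoc, ← Complex.exp_add]
    congr 2
    push_cast
    field_simp
    ring
  have hzl : z ^ l = ((r ^ l : ℝ) : ℂ) * Complex.exp (((-(2 * l * θ) : ℝ) : ℂ) * Complex.I) := by
    rw [hz, mul_pow, ← Complex.exp_nat_mul]
    push_cast
    congr 2
    ring
  have hrl : 0 < r ^ l := by positivity
  have hrl1 : r ^ l < 1 := pow_lt_one₀ hr.le hr1 hl.ne'
  rw [← Real.cos_neg (2 * l * θ), aux_poisson _ _ hrl hrl1, ← hzl]
  rw [Finset.sum_congr rfl fun j _ => aux_poisson r _ hr hr1]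
  rw [Finset.sum_congr rfl fun j _ => by rw [← hterm j]]
  rw [Finset.sum_sub_distrib, ← Finset.mul_sum, ← Complex.re_sum, h, ← Complex.ofReal_natCast,
    Complex.re_ofReal_mul]
  simp
  ring

lemma aux_inv_sum_lt (l : ℕ) (hl : 0 < l) (T s θ₁ θ₂ : ℝ) (hs : 0 < s) (hT : 0 ≤ T)
    (hc : Real.cos (2 * l * θ₁) < Real.cos (2 * l * θ₂)) :
    ∑ j ∈ Finset.Icc 1 l, (Real.sin ((j : ℝ) * Real.pi / l - θ₁) ^ 2 + T + s)⁻¹ <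
    ∑ j ∈ Finset.Icc 1 l, (Real.sin ((j : ℝ) * Real.pi / l - θ₂) ^ 2 + T + s)⁻¹ := by
  obtain ⟨r, hr, hr1, hA⟩ : ∃ r : ℝ, 0 < r ∧ r < 1 ∧ 1 + r ^ 2 = 2 * r * (1 + 2 * (T + s)) := by
    set A := 1 + 2 * (T + s) with hAd
    have hA1 : 1 < A := by rw [hAd]; linarith
    have hsq := Real.sq_sqrt (show 0 ≤ A ^ 2 - 1 by nlinarith)
    have hsp := Real.sqrt_pos.2 (show 0 < A ^ 2 - 1 by nlinarith)
    refine ⟨A - √(A ^ 2 - 1), ?_, ?_, ?_⟩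
    · nlinarith
    · nlinarith
    · nlinarith
  have h1 : 0 < 1 - r ^ 2 := by nlinarith
  have hterm : ∀ θ : ℝ, ∀ j : ℕ, (Real.sin ((j : ℝ) * Real.pi / l - θ) ^ 2 + T + s)⁻¹
      = (4 * r / (1 - r ^ 2)) * ((1 - r ^ 2) /
        (1 + r ^ 2 - 2 * r * Real.cos (2 * ((j : ℝ) * Real.pi / l - θ)))) := by
    intro θ j
    have h2 : 0 < Real.sin ((j : ℝ) * Real.pi / l - θ) ^ 2 + T + s := by positivity
    rw [hA, Real.cos_two_mul, Real.cos_sq']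
    have h3 : 2 * r * (1 + 2 * (T + s)) - 2 * r * (2 * (1 - Real.sin ((j : ℝ) * Real.pi / l - θ) ^ 2) - 1)
      = 4 * r * (Real.sin ((j : ℝ) * Real.pi / l - θ) ^ 2 + T + s) := by ring
    rw [h3]
    field_simp
  rw [Finset.sum_congr rfl fun j _ => hterm θ₁ j, Finset.sum_congr rfl fun j _ => hterm θ₂ j,
    ← Finset.mul_sum, ← Finset.mul_sum, aux_sum l hl r _ hr hr1, aux_sum l hl r _ hr hr1]
  have hrl : 0 < r ^ l := by positivity
  have hrl1 : r ^ l < 1 := pow_lt_one₀ hr.le hr1 hl.ne'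
  have hlR : (0 : ℝ) < l := by exact_mod_cast hl
  refine mul_lt_mul_of_pos_left (mul_lt_mul_of_pos_left ?_ hlR) (by positivity)
  apply div_lt_div_of_pos_left
  · nlinarith
  · nlinarith [Real.cos_le_one (2 * l * θ₂)]
  · nlinarith

lemma aux_integrand (p t x : ℝ) (hp : p ∈ Set.Ioo (0 : ℝ) 1) (ht : 0 < t) (hx : 0 < x) :
    Real.rpowIntegrand₀₁ p t x⁻¹ = t ^ (p - 1) / t * (x + t⁻¹)⁻¹ := by
  rw [Real.rpowIntegrand₀₁_eq_pow_div hp ht.le (by positivity)]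
  field_simp

lemma aux_rpow_sum_lt (l : ℕ) (hl : 0 < l) (T β θ₁ θ₂ : ℝ) (hT : 0 ≤ T)
    (hβ : β ∈ Set.Ioo (0 : ℝ) 1)
    (h₁ : ∀ j : ℕ, Real.sin ((j : ℝ) * Real.pi / l - θ₁) ≠ 0)
    (h₂ : ∀ j : ℕ, Real.sin ((j : ℝ) * Real.pi / l - θ₂) ≠ 0)
    (hc : Real.cos (2 * l * θ₁) < Real.cos (2 * l * θ₂)) :
    ∑ j ∈ Finset.Icc 1 l, (Real.sin ((j : ℝ) * Real.pi / l - θ₁) ^ 2 + T) ^ (-β) <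
    ∑ j ∈ Finset.Icc 1 l, (Real.sin ((j : ℝ) * Real.pi / l - θ₂) ^ 2 + T) ^ (-β) := by
  have hpos₁ : ∀ j : ℕ, 0 < Real.sin ((j : ℝ) * Real.pi / l - θ₁) ^ 2 + T := fun j => by
    have := h₁ j; positivity
  have hpos₂ : ∀ j : ℕ, 0 < Real.sin ((j : ℝ) * Real.pi / l - θ₂) ^ 2 + T := fun j => by
    have := h₂ j; positivity
  have hlt : ∀ t : ℝ, 0 < t →
      ∑ j ∈ Finset.Icc 1 l,
        Real.rpowIntegrand₀₁ β t (Real.sin ((j : ℝ) * Real.pi / l - θ₁) ^ 2 + T)⁻¹ <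
      ∑ j ∈ Finset.Icc 1 l,
        Real.rpowIntegrand₀₁ β t (Real.sin ((j : ℝ) * Real.pi / l - θ₂) ^ 2 + T)⁻¹ := by
    intro t ht
    rw [Finset.sum_congr rfl fun j _ => aux_integrand β t _ hβ ht (hpos₁ j),
      Finset.sum_congr rfl fun j _ => aux_integrand β t _ hβ ht (hpos₂ j),
      ← Finset.mul_sum, ← Finset.mul_sum]
    exact mul_lt_mul_of_pos_left
      (aux_inv_sum_lt l hl T t⁻¹ θ₁ θ₂ (by positivity) hT hc) (by positivity)
  have hrep : ∀ z : ℕ → ℝ, (∀ j, 0 < z j) → ∑ j ∈ Finset.Icc 1 l, z j ^ (-β) =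
      (∫ t in Set.Ioi 0, Real.rpowIntegrand₀₁ β t 1)⁻¹ *
        ∫ t in Set.Ioi 0, ∑ j ∈ Finset.Icc 1 l, Real.rpowIntegrand₀₁ β t (z j)⁻¹ := by
    intro z hz
    rw [MeasureTheory.integral_finsetSum _ fun j _ =>
      Real.integrableOn_rpowIntegrand₀₁_Ioi hβ (inv_pos.2 (hz j)).le, Finset.mul_sum]
    refine Finset.sum_congr rfl fun j _ => ?_
    rw [← Real.rpow_eq_const_mul_integral hβ (inv_pos.2 (hz j)).le, Real.rpow_neg (hz j).le,
      Real.inv_rpow (hz j).le]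
  have hint : ∀ z : ℕ → ℝ, (∀ j, 0 < z j) → MeasureTheory.IntegrableOn
      (fun t => ∑ j ∈ Finset.Icc 1 l, Real.rpowIntegrand₀₁ β t (z j)⁻¹) (Set.Ioi 0) := by
    intro z hz
    exact MeasureTheory.integrable_finsetSum _ fun j _ =>
      Real.integrableOn_rpowIntegrand₀₁_Ioi hβ (inv_pos.2 (hz j)).le
  rw [hrep _ hpos₁, hrep _ hpos₂]
  refine mul_lt_mul_of_pos_left ?_ (inv_pos.2 (Real.integral_rpowIntegrand₀₁_one_pos hβ))
  rw [← sub_pos, ← MeasureTheory.integral_sub (hint _ hpos₂) (hint _ hpos₁)]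
  rw [MeasureTheory.setIntegral_pos_iff_support_of_nonneg_ae]
  · refine lt_of_lt_of_le ?_ (MeasureTheory.measure_mono (s := Set.Ioi (0:ℝ)) ?_)
    · simp
    · intro t ht
      exact ⟨(sub_pos.2 (hlt t ht)).ne', ht⟩
  · refine MeasureTheory.ae_restrict_of_forall_mem measurableSet_Ioi fun t ht => ?_
    exact (sub_pos.2 (hlt t ht)).le
  · exact (hint _ hpos₂).sub (hint _ hpos₁)

lemma aux_sin_ne (l : ℕ) (hl : 0 < l) (θ : ℝ) (h0 : 0 < θ) (h1 : θ < Real.pi / l) (j : ℕ) :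
    Real.sin ((j : ℝ) * Real.pi / l - θ) ≠ 0 := by
  intro h
  obtain ⟨n, hn⟩ := Real.sin_eq_zero_iff.1 h
  have hlR : (0 : ℝ) < l := by exact_mod_cast hl
  have hpi := Real.pi_pos
  have e : l * θ = (j - n * l : ℤ) * Real.pi := by
    push_cast
    field_simp at hn
    linarith
  rw [lt_div_iff₀ hlR] at h1
  have hp : 0 < l * θ := by positivity
  have a : (0 : ℝ) < (j - n * l : ℤ) := by
    by_contra hh
    nlinarith
  have b : ((j - n * l : ℤ) : ℝ) < 1 := by
    by_contra hh
    nlinarith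
  have a' : 0 < (j - n * l : ℤ) := by exact_mod_cast a
  have b' : (j - n * l : ℤ) < 1 := by exact_mod_cast b
  omega

theorem dihedralU_monotonicity_in_theta (l : ℕ) (hl : 2 ≤ l)
    (α : ℝ) (hα : α ∈ Set.Ioo (0 : ℝ) 2)
    (φ : ℝ) (hφ : φ ∈ Set.Ioo (-(Real.pi / 2)) (Real.pi / 2)) :
    StrictAntiOn (fun θ => dihedralU l α θ φ) (Set.Ioo 0 (Real.pi / (2 * l))) ∧
    StrictMonoOn (fun θ => dihedralU l α θ φ) (Set.Ioo (Real.pi / (2 * l)) (Real.pi / l)) := by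
  have hl0 : 0 < l := by omega
  have hlR : (0 : ℝ) < l := by exact_mod_cast hl0
  have hpi := Real.pi_pos
  have hβ : α / 2 ∈ Set.Ioo (0 : ℝ) 1 := ⟨by linarith [hα.1], by linarith [hα.2]⟩
  have hcos : 0 < Real.cos φ := Real.cos_pos_of_mem_Ioo hφ
  have hhalf : Real.pi / (2 * l) = Real.pi / l / 2 := by field_simp
  have hpl : 0 < Real.pi / l := by positivity
  have key : ∀ θ₁ θ₂ : ℝ, 0 < θ₁ → θ₁ < Real.pi / l → 0 < θ₂ → θ₂ < Real.pi / l →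
      Real.cos (2 * l * θ₁) < Real.cos (2 * l * θ₂) →
      dihedralU l α θ₁ φ < dihedralU l α θ₂ φ := by
    intro θ₁ θ₂ a b c d e
    unfold dihedralU
    refine mul_lt_mul_of_pos_left (add_lt_add_right ?_ _) (by positivity)
    rw [neg_div]
    exact aux_rpow_sum_lt l hl0 _ _ θ₁ θ₂ (sq_nonneg _) hβ (aux_sin_ne l hl0 θ₁ a b)
      (aux_sin_ne l hl0 θ₂ c d) e
  constructor
  · rintro x ⟨hx0, hx1⟩ y ⟨hy0, hy1⟩ hxy
    refine key y x hy0 (by linarith) hx0 (by linarith) ?_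
    rw [lt_div_iff₀ (by positivity)] at hy1
    refine Real.cos_lt_cos_of_nonneg_of_le_pi (by positivity) (by linarith) ?_
    gcongr
  · rintro x ⟨hx0, hx1⟩ y ⟨hy0, hy1⟩ hxy
    refine key x y (by linarith) hx1 (by linarith) hy1 ?_
    rw [div_lt_iff₀ (by positivity)] at hx0
    rw [lt_div_iff₀ hlR] at hy1
    rw [← Real.cos_two_pi_sub (2 * l * x), ← Real.cos_two_pi_sub (2 * l * y)]
    have : 2 * l * x < 2 * l * y := by gcongr
    exact Real.cos_lt_cos_of_nonneg_of_le_pi (by linarith) (by linarith) (by linarith)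
end

section
/- A point θ ∈ ℝ with θ ∉ (π/l)ℤ is a critical point of the function θ ↦ U(θ, 0) if and only if θ = (2k+1)π/(2l) for some integer k. Moreover at each such point both partial derivatives of U vanish: ∂U/∂θ((2k+1)π/(2l), 0) = 0 and ∂U/∂φ((2k+1)π/(2l), 0) = 0; these are the planar regular 2l-gon central configurations. -/
open Real Finset

noncomputable def gg (α x : ℝ) : ℝ := (Real.sin x ^ 2) ^ (-α / 2)

noncomputable def gg1 (α x : ℝ) : ℝ := -α * gg α x * (Real.cos x / Real.sin x)

noncomputable def gg2 (α x : ℝ) : ℝ :=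
  α ^ 2 * gg α x * (Real.cos x / Real.sin x) ^ 2 + α * gg α x / Real.sin x ^ 2

lemma gg_pos (α x : ℝ) (h : Real.sin x ≠ 0) : 0 < gg α x := by
  unfold gg; positivity

lemma gg2_pos (α x : ℝ) (hα : 0 < α) (h : Real.sin x ≠ 0) : 0 < gg2 α x := by
  have := gg_pos α x h
  unfold gg2; positivity

lemma gg_hasDerivAt (α x : ℝ) (h : Real.sin x ≠ 0) : HasDerivAt (gg α) (gg1 α x) x := by
  have h2 : Real.sin x ^ 2 ≠ 0 := pow_ne_zero 2 h
  have := ((Real.hasDerivAt_sin x).pow 2).rpow_const (p := -α / 2) (Or.inl h2)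
  refine this.congr_deriv ?_
  unfold gg1 gg
  simp only [Pi.pow_apply]
  rw [Real.rpow_sub_one h2]
  field_simp
  norm_num
  ring

lemma gg1_hasDerivAt (α x : ℝ) (h : Real.sin x ≠ 0) : HasDerivAt (gg1 α) (gg2 α x) x := by
  have := ((gg_hasDerivAt α x h).const_mul (-α)).mul
    ((Real.hasDerivAt_cos x).div (Real.hasDerivAt_sin x) h)
  refine this.congr_deriv ?_
  unfold gg2 gg1
  simp only [Pi.div_apply]
  have e : Real.cos x ^ 2 = 1 - Real.sin x ^ 2 := by rw [← Real.sin_sq_add_cos_sq x]; ring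
  field_simp
  ring_nf
  simp only [e]
  ring

lemma gg_neg (α x : ℝ) : gg α (-x) = gg α x := by simp [gg]

lemma gg_add_pi (α x : ℝ) : gg α (x + Real.pi) = gg α x := by simp [gg, Real.sin_add_pi]

noncomputable def SS (l : ℕ) (α t : ℝ) : ℝ :=
  ∑ j ∈ Finset.Icc 1 l, gg α ((j : ℝ) * Real.pi / l - t)

lemma SS_eq' (l : ℕ) (α t : ℝ) :
    SS l α t = ∑ j ∈ Finset.range l, gg α (((j + 1 : ℕ) : ℝ) * Real.pi / l - t) := by
  unfold SS
  rw [Finset.range_eq_Ico, Finset.sum_Ico_add' (fun j : ℕ => gg α ((j : ℝ) * Real.pi / l - t)) 0 l 1]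
  rfl

lemma SS_eq (l : ℕ) (hl : l ≠ 0) (α t : ℝ) :
    SS l α t = ∑ j ∈ Finset.range l, gg α ((j : ℝ) * Real.pi / l - t) := by
  have hl' : (l : ℝ) ≠ 0 := by exact_mod_cast hl
  rw [SS_eq']
  have h1 := Finset.sum_range_succ (fun j : ℕ => gg α ((j : ℝ) * Real.pi / l - t)) l
  have h2 := Finset.sum_range_succ' (fun j : ℕ => gg α ((j : ℝ) * Real.pi / l - t)) l
  have h3 : gg α ((l : ℝ) * Real.pi / l - t) = gg α (((0 : ℕ) : ℝ) * Real.pi / l - t) := by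
    rw [← gg_add_pi α (((0 : ℕ) : ℝ) * Real.pi / l - t)]
    congr 1
    field_simp
    push_cast
    ring
  rw [h3] at h1
  linarith

lemma SS_periodic (l : ℕ) (hl : l ≠ 0) (α : ℝ) : Function.Periodic (SS l α) (Real.pi / l) := by
  intro t
  rw [SS_eq', SS_eq l hl]
  refine Finset.sum_congr rfl fun j _ => ?_
  congr 1
  push_cast
  ring

lemma SS_neg (l : ℕ) (hl : l ≠ 0) (α t : ℝ) : SS l α (-t) = SS l α t := by
  have hl' : (l : ℝ) ≠ 0 := by exact_mod_cast hl
  rw [SS_eq l hl, SS_eq', ← Finset.sum_range_reflect]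
  refine Finset.sum_congr rfl fun j hj => ?_
  have hj' := Finset.mem_range.mp hj
  have : ((l - 1 - j : ℕ) : ℝ) = l - 1 - j := by
    rw [Nat.sub_sub, Nat.cast_sub (by omega)]; push_cast; ring
  rw [this, ← gg_neg, ← gg_add_pi]
  congr 1
  push_cast
  field_simp
  ring

lemma SS_symm (l : ℕ) (hl : l ≠ 0) (α t : ℝ) (k : ℤ) :
    SS l α (2 * ((2 * (k : ℝ) + 1) * Real.pi / (2 * l)) - t) = SS l α t := by
  have hl' : (l : ℝ) ≠ 0 := by exact_mod_cast hl
  have := (SS_periodic l hl α).int_mul (2 * k + 1) (-t)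
  rw [SS_neg l hl] at this
  rw [← this]
  congr 1
  push_cast
  field_simp
  ring

lemma U_eq (l : ℕ) (α t : ℝ) : dihedralU l α t 0 =
    2 ^ (-α) * ((∑ j ∈ Finset.Icc 1 (l - 1), Real.sin ((j : ℝ) * Real.pi / l) ^ (-α)) +
      SS l α t) := by
  simp [dihedralU, SS, gg]

lemma deriv_U (l : ℕ) (α t : ℝ) :
    deriv (fun t => dihedralU l α t 0) t = 2 ^ (-α) * deriv (SS l α) t := by
  simp only [U_eq]
  rw [deriv_const_mul_field, deriv_const_add]

lemma deriv_SS_mid (l : ℕ) (hl : l ≠ 0) (α : ℝ) (k : ℤ) :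
    deriv (SS l α) ((2 * (k : ℝ) + 1) * Real.pi / (2 * l)) = 0 := by
  set c := (2 * (k : ℝ) + 1) * Real.pi / (2 * l) with hc
  have h := deriv_comp_const_sub (f := SS l α) (2 * c) c
  have e : (fun x => SS l α (2 * c - x)) = SS l α := by
    funext t; exact SS_symm l hl α t k
  rw [e, show 2 * c - c = c by ring] at h
  linarith

lemma sin_ne (l : ℕ) (hl : l ≠ 0) (t : ℝ) (ht : ∀ k : ℤ, t ≠ (k : ℝ) * (Real.pi / l)) (j : ℕ) :
    Real.sin ((j : ℝ) * Real.pi / l - t) ≠ 0 := by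
  have hl' : (l : ℝ) ≠ 0 := by exact_mod_cast hl
  intro h
  obtain ⟨n, hn⟩ := Real.sin_eq_zero_iff.mp h
  apply ht (j - n * l)
  have : t = (j : ℝ) * Real.pi / l - n * Real.pi := by linarith
  rw [this]
  push_cast
  field_simp

noncomputable def DD (l : ℕ) (α t : ℝ) : ℝ :=
  ∑ j ∈ Finset.Icc 1 l, -gg1 α ((j : ℝ) * Real.pi / l - t)

lemma SS_hasDerivAt (l : ℕ) (hl : l ≠ 0) (α t : ℝ) (ht : ∀ k : ℤ, t ≠ (k : ℝ) * (Real.pi / l)) :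
    HasDerivAt (SS l α) (DD l α t) t := by
  unfold SS DD
  refine HasDerivAt.fun_sum fun j _ => ?_
  exact HasDerivAt.comp_const_sub _ _ (gg_hasDerivAt α _ (sin_ne l hl t ht j))

lemma DD_hasDerivAt (l : ℕ) (hl : l ≠ 0) (α t : ℝ) (ht : ∀ k : ℤ, t ≠ (k : ℝ) * (Real.pi / l)) :
    HasDerivAt (DD l α) (∑ j ∈ Finset.Icc 1 l, gg2 α ((j : ℝ) * Real.pi / l - t)) t := by
  unfold DD
  refine HasDerivAt.fun_sum fun j _ => ?_
  have := (HasDerivAt.comp_const_sub _ _ (gg1_hasDerivAt α _ (sin_ne l hl t ht j))).fun_neg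
  simpa using this

lemma not_mul (l : ℕ) (hl : l ≠ 0) (m : ℤ) (t : ℝ)
    (ht : t ∈ Set.Ioo ((m : ℝ) * (Real.pi / l)) ((m + 1 : ℝ) * (Real.pi / l))) (k : ℤ) :
    t ≠ (k : ℝ) * (Real.pi / l) := by
  have hp : 0 < Real.pi / l := div_pos Real.pi_pos (by positivity)
  rintro rfl
  have h1 := lt_of_mul_lt_mul_right ht.1 hp.le
  have h2 := lt_of_mul_lt_mul_right ht.2 hp.le
  have h3 : m < k := by exact_mod_cast h1
  have h4 : k < m + 1 := by exact_mod_cast h2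
  omega

lemma DD_strictMono (l : ℕ) (hl : l ≠ 0) (α : ℝ) (hα : 0 < α) (m : ℤ) :
    StrictMonoOn (DD l α) (Set.Ioo ((m : ℝ) * (Real.pi / l)) ((m + 1 : ℝ) * (Real.pi / l))) := by
  refine strictMonoOn_of_deriv_pos (convex_Ioo _ _) ?_ ?_
  · intro t ht
    exact (DD_hasDerivAt l hl α t (not_mul l hl m t ht)).continuousAt.continuousWithinAt
  · intro t ht
    rw [interior_Ioo] at ht
    have h := not_mul l hl m t ht
    rw [(DD_hasDerivAt l hl α t h).deriv]
    refine Finset.sum_pos (fun j _ => gg2_pos α _ hα (sin_ne l hl t h j)) ?_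
    exact ⟨1, by simp; omega⟩

theorem planar_2lgon_central_configurations (l : ℕ) (hl : 2 ≤ l)
    (α : ℝ) (hα : α ∈ Set.Ioo (0 : ℝ) 2)
    (θ : ℝ) (hθ : ∀ k : ℤ, θ ≠ (k : ℝ) * (Real.pi / l)) :
    (deriv (fun t => dihedralU l α t 0) θ = 0 ↔
      ∃ k : ℤ, θ = (2 * (k : ℝ) + 1) * Real.pi / (2 * l)) ∧
    ∀ k : ℤ,
      deriv (fun t => dihedralU l α t 0) ((2 * (k : ℝ) + 1) * Real.pi / (2 * l)) = 0 ∧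
      deriv (fun p => dihedralU l α ((2 * (k : ℝ) + 1) * Real.pi / (2 * l)) p) 0 = 0 := by
  have hl0 : l ≠ 0 := by omega
  have hlp : (0 : ℝ) < l := by positivity
  have hC : (0 : ℝ) < 2 ^ (-α) := by positivity
  have hmid : ∀ k : ℤ,
      deriv (fun t => dihedralU l α t 0) ((2 * (k : ℝ) + 1) * Real.pi / (2 * l)) = 0 := by
    intro k
    rw [deriv_U, deriv_SS_mid l hl0, mul_zero]
  refine ⟨⟨fun h => ?_, ?_⟩, fun k => ⟨hmid k, ?_⟩⟩
  · rw [deriv_U] at h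
    have h0 : deriv (SS l α) θ = 0 := (mul_eq_zero.mp h).resolve_left hC.ne'
    rw [(SS_hasDerivAt l hl0 α θ hθ).deriv] at h0
    have hp : 0 < Real.pi / l := div_pos Real.pi_pos hlp
    set m := ⌊θ / (Real.pi / l)⌋ with hm
    have hmθ : θ ∈ Set.Ioo ((m : ℝ) * (Real.pi / l)) ((m + 1 : ℝ) * (Real.pi / l)) := by
      refine ⟨lt_of_le_of_ne ?_ (hθ m).symm, ?_⟩
      · exact (le_div_iff₀ hp).mp (Int.floor_le _)
      · exact (div_lt_iff₀ hp).mp (Int.lt_floor_add_one _)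
    have hce : (2 * (m : ℝ) + 1) * Real.pi / (2 * l) = (m + 1 / 2 : ℝ) * (Real.pi / l) := by
      field_simp
    have hc : (2 * (m : ℝ) + 1) * Real.pi / (2 * l) ∈
        Set.Ioo ((m : ℝ) * (Real.pi / l)) ((m + 1 : ℝ) * (Real.pi / l)) := by
      rw [hce]
      constructor <;> exact mul_lt_mul_of_pos_right (by linarith) hp
    have hD := deriv_SS_mid l hl0 α m
    rw [(SS_hasDerivAt l hl0 α _ (not_mul l hl0 m _ hc)).deriv] at hD
    exact ⟨m, (DD_strictMono l hl0 α hα.1 m).injOn hmθ hc (h0.trans hD.symm)⟩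
  · rintro ⟨k, rfl⟩
    exact hmid k
  · have h := deriv_comp_neg
      (fun p => dihedralU l α ((2 * (k : ℝ) + 1) * Real.pi / (2 * l)) p) 0
    have e : (fun p => dihedralU l α ((2 * (k : ℝ) + 1) * Real.pi / (2 * l)) (-p)) =
        (fun p => dihedralU l α ((2 * (k : ℝ) + 1) * Real.pi / (2 * l)) p) := by
      funext p; simp [dihedralU]
    rw [e, neg_zero] at h
    linarith
end

section
/- There exists a unique φ̂ ∈ (0, π/2) such that f_0(φ̂) = 0, where f_0(φ) = Σ_{j=1}^{l-1} (sin(jπ/l))^{-α} − Σ_{j=1}^{l} cos²(jπ/l) / (sin²(jπ/l) + tan²φ)^{β+1}. Moreover the point (θ, φ) = (0, φ̂) is a critical point of U, i.e. ∂U/∂θ(0, φ̂) = 0 and ∂U/∂φ(0, φ̂) = 0; this is the prism central configuration. -/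
open Real Finset

lemma prism_A_pos (l : ℕ) (hl : 2 ≤ l) (α : ℝ) :
    0 < ∑ j ∈ Finset.Icc 1 (l - 1), Real.sin ((j : ℝ) * Real.pi / l) ^ (-α) := by
  apply Finset.sum_pos
  · intro j hj
    rw [Finset.mem_Icc] at hj
    apply Real.rpow_pos_of_pos
    have hl0 : (0 : ℝ) < l := by exact_mod_cast (by omega : 0 < l)
    have h1 : (0 : ℝ) < j := by exact_mod_cast (by omega : 0 < j)
    have h2 : (j : ℝ) < l := by exact_mod_cast (by omega : j < l)
    apply Real.sin_pos_of_pos_of_lt_pi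
    · have := Real.pi_pos
      positivity
    · rw [div_lt_iff₀ hl0]
      nlinarith [Real.pi_pos]
  · exact ⟨1, by rw [Finset.mem_Icc]; omega⟩

lemma prism_theta_even (l : ℕ) (hl : 2 ≤ l) (α φ t : ℝ) :
    dihedralU l α (-t) φ = dihedralU l α t φ := by
  have hl0 : (l : ℝ) ≠ 0 := by exact_mod_cast (by omega : l ≠ 0)
  unfold dihedralU
  congr 2
  have hmem : ∀ j ∈ Finset.Icc 1 l, (if j = l then l else l - j) ∈ Finset.Icc 1 l := by
    intro j hj
    rw [Finset.mem_Icc] at *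
    split_ifs <;> omega
  have hinv : ∀ j ∈ Finset.Icc 1 l,
      (if (if j = l then l else l - j) = l then l else l - (if j = l then l else l - j)) = j := by
    intro j hj
    rw [Finset.mem_Icc] at hj
    split_ifs <;> omega
  refine Finset.sum_bij' (fun j _ => if j = l then l else l - j)
    (fun j _ => if j = l then l else l - j) hmem hmem hinv hinv ?_
  intro j hj
  rw [Finset.mem_Icc] at hj
  congr 2
  split_ifs with h
  · subst h
    have e : (j : ℝ) * Real.pi / j = Real.pi := by field_simp
    rw [e, sub_neg_eq_add, Real.sin_pi_sub, add_comm, Real.sin_add_pi, neg_sq]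
  · rw [Nat.cast_sub hj.2]
    have e : ((l : ℝ) - j) * Real.pi / l - t = Real.pi - ((j : ℝ) * Real.pi / l - -t) := by
      field_simp
      ring
    rw [e, Real.sin_pi_sub]

/-- The function `f₀` in the variable `T = tan² φ`. -/
noncomputable def prismG (l : ℕ) (A β T : ℝ) : ℝ :=
  A - ∑ j ∈ Finset.Icc 1 l, Real.cos ((j : ℝ) * Real.pi / l) ^ 2 /
    (Real.sin ((j : ℝ) * Real.pi / l) ^ 2 + T) ^ (β + 1)

lemma prism_last_cos (l : ℕ) (hl : 2 ≤ l) : Real.cos ((l : ℝ) * Real.pi / l) ^ 2 = 1 := by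
  have hl0 : (l : ℝ) ≠ 0 := by exact_mod_cast (by omega : l ≠ 0)
  have e : (l : ℝ) * Real.pi / l = Real.pi := by field_simp
  rw [e, Real.cos_pi]; norm_num

lemma prism_last_sin (l : ℕ) (hl : 2 ≤ l) : Real.sin ((l : ℝ) * Real.pi / l) ^ 2 = 0 := by
  have hl0 : (l : ℝ) ≠ 0 := by exact_mod_cast (by omega : l ≠ 0)
  have e : (l : ℝ) * Real.pi / l = Real.pi := by field_simp
  rw [e, Real.sin_pi]; norm_num

lemma prismG_strictMono (l : ℕ) (hl : 2 ≤ l) (A β : ℝ) (hβ : 0 < β) :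
    StrictMonoOn (prismG l A β) (Set.Ioi 0) := by
  intro x hx y hy hxy
  rw [Set.mem_Ioi] at hx hy
  unfold prismG
  apply sub_lt_sub_left
  apply Finset.sum_lt_sum
  · intro j _
    have := sq_nonneg (Real.sin ((j : ℝ) * Real.pi / l))
    apply div_le_div_of_nonneg_left (sq_nonneg _)
    · apply Real.rpow_pos_of_pos; linarith
    · apply Real.rpow_le_rpow <;> linarith
  · refine ⟨l, by rw [Finset.mem_Icc]; omega, ?_⟩
    rw [prism_last_cos l hl, prism_last_sin l hl, zero_add, zero_add]
    apply one_div_lt_one_div_of_lt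
    · exact Real.rpow_pos_of_pos hx _
    · exact Real.rpow_lt_rpow hx.le hxy (by linarith)

lemma prismG_continuousOn (l : ℕ) (A β : ℝ) :
    ContinuousOn (prismG l A β) (Set.Ioi 0) := by
  unfold prismG
  refine continuousOn_const.sub (continuousOn_finsetSum _ fun j _ => ?_)
  have h : ∀ T ∈ Set.Ioi (0 : ℝ), 0 < Real.sin ((j : ℝ) * Real.pi / l) ^ 2 + T := by
    intro T hT
    rw [Set.mem_Ioi] at hT
    positivity
  refine continuousOn_const.div ?_ ?_
  · exact (continuousOn_const.add continuousOn_id).rpow_const fun T hT => Or.inl (h T hT).ne'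
  · intro T hT
    exact (Real.rpow_pos_of_pos (h T hT) _).ne'

lemma prismG_root (l : ℕ) (hl : 2 ≤ l) (A β : ℝ) (hA : 0 < A) (hβ : 0 < β) :
    ∃ T, 0 < T ∧ prismG l A β T = 0 := by
  have hl0 : (0 : ℝ) < l := by exact_mod_cast (by omega : 0 < l)
  have hl1 : (1 : ℝ) ≤ l := by exact_mod_cast (by omega : 1 ≤ l)
  have hb : β + 1 ≠ 0 := by linarith
  -- a point with prescribed power
  have key : ∀ c : ℝ, 0 < c → (c⁻¹ ^ (β + 1)⁻¹) ^ (β + 1) = c⁻¹ := fun c hc =>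
    Real.rpow_inv_rpow (by positivity) hb
  have hA2 : 0 < A / (2 * l) := by positivity
  set T0 := (A + 1)⁻¹ ^ (β + 1)⁻¹ with hT0
  set T1 := (A / (2 * l))⁻¹ ^ (β + 1)⁻¹ with hT1
  have p0 : 0 < T0 := by positivity
  have p1 : 0 < T1 := by positivity
  have h01 : T0 ≤ T1 := by
    apply Real.rpow_le_rpow (by positivity) _ (by positivity)
    apply inv_anti₀ hA2
    rw [div_le_iff₀ (by positivity)]
    nlinarith
  have g0 : prismG l A β T0 ≤ 0 := by
    unfold prismG
    have h := Finset.single_le_sum (s := Finset.Icc 1 l)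
      (f := fun j : ℕ => Real.cos ((j : ℝ) * Real.pi / l) ^ 2 /
        (Real.sin ((j : ℝ) * Real.pi / l) ^ 2 + T0) ^ (β + 1))
      (fun j _ => by positivity) (show l ∈ Finset.Icc 1 l by rw [Finset.mem_Icc]; omega)
    rw [prism_last_cos l hl, prism_last_sin l hl, zero_add, hT0, key _ (by positivity),
      one_div, inv_inv, ← hT0] at h
    linarith
  have g1 : 0 ≤ prismG l A β T1 := by
    unfold prismG
    have h := Finset.sum_le_card_nsmul (Finset.Icc 1 l)
      (fun j : ℕ => Real.cos ((j : ℝ) * Real.pi / l) ^ 2 /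
        (Real.sin ((j : ℝ) * Real.pi / l) ^ 2 + T1) ^ (β + 1)) (A / (2 * l)) (by
        intro j _
        have e : A / (2 * l) = 1 / T1 ^ (β + 1) := by
          rw [hT1, key _ hA2, one_div, inv_inv]
        rw [e]
        have := sq_nonneg (Real.sin ((j : ℝ) * Real.pi / l))
        apply div_le_div₀ zero_le_one (Real.cos_sq_le_one _) (by positivity)
        apply Real.rpow_le_rpow p1.le <;> linarith)
    rw [Nat.card_Icc, nsmul_eq_mul, Nat.add_sub_cancel] at h
    have e : (l : ℝ) * (A / (2 * l)) = A / 2 := by field_simp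
    rw [e] at h
    linarith
  have hc : ContinuousOn (prismG l A β) (Set.Icc T0 T1) :=
    (prismG_continuousOn l A β).mono fun T hT => lt_of_lt_of_le p0 hT.1
  obtain ⟨T, hT, hz⟩ := intermediate_value_Icc h01 hc ⟨g0, g1⟩
  exact ⟨T, lt_of_lt_of_le p0 hT.1, hz⟩

lemma prism_deriv_phi (l : ℕ) (α φ : ℝ) (hφ : φ ∈ Set.Ioo 0 (Real.pi / 2)) :
    HasDerivAt (fun p => dihedralU l α 0 p)
      ((2 * Real.cos φ) ^ (-α) * (α * Real.tan φ) *
        prismG l (∑ j ∈ Finset.Icc 1 (l - 1), Real.sin ((j : ℝ) * Real.pi / l) ^ (-α))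
          (α / 2) (Real.tan φ ^ 2)) φ := by
  have hc : 0 < Real.cos φ := Real.cos_pos_of_mem_Ioo ⟨by linarith [hφ.1, Real.pi_pos], hφ.2⟩
  have ht : 0 < Real.tan φ := Real.tan_pos_of_pos_of_lt_pi_div_two hφ.1 hφ.2
  unfold dihedralU prismG
  simp only [sub_zero]
  set A := ∑ j ∈ Finset.Icc 1 (l - 1), Real.sin ((j : ℝ) * Real.pi / l) ^ (-α)
  have h1 : HasDerivAt (fun p => (2 * Real.cos p) ^ (-α))
      ((2 * Real.cos φ) ^ (-α) * (α * Real.tan φ)) φ := by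
    have := ((Real.hasDerivAt_cos φ).const_mul 2).rpow_const (p := -α) (Or.inl (by positivity))
    convert this using 1
    rw [Real.rpow_sub_one (by positivity), Real.tan_eq_sin_div_cos]
    field_simp
  have hD : ∀ j : ℕ, 0 < Real.sin ((j : ℝ) * Real.pi / l) ^ 2 + Real.tan φ ^ 2 :=
    fun j => by positivity
  have h2 : HasDerivAt (fun p => A + ∑ j ∈ Finset.Icc 1 l,
        (Real.sin ((j : ℝ) * Real.pi / l) ^ 2 + Real.tan p ^ 2) ^ (-α / 2))
      (∑ j ∈ Finset.Icc 1 l, -(α * Real.tan φ) * ((1 + Real.tan φ ^ 2) /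
        (Real.sin ((j : ℝ) * Real.pi / l) ^ 2 + Real.tan φ ^ 2) ^ (α / 2 + 1))) φ := by
    refine HasDerivAt.const_add A (HasDerivAt.fun_sum fun j _ => ?_)
    have := (((Real.hasDerivAt_tan hc.ne').pow 2).const_add
      (Real.sin ((j : ℝ) * Real.pi / l) ^ 2)).rpow_const (p := -α / 2) (Or.inl (hD j).ne')
    refine this.congr_deriv ?_
    have e : -α / 2 - 1 = -(α / 2 + 1) := by ring
    have e2 : 1 / Real.cos φ ^ 2 = 1 + Real.tan φ ^ 2 := by
      rw [← Real.inv_one_add_tan_sq hc.ne', one_div, inv_inv]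
    simp only [Pi.pow_apply]
    rw [e, Real.rpow_neg (hD j).le, e2]
    push_cast
    ring
  refine (h1.fun_mul h2).congr_deriv ?_
  symm
  have e3 : ∀ j : ℕ, (Real.sin ((j : ℝ) * Real.pi / l) ^ 2 + Real.tan φ ^ 2) ^ (-α / 2)
      = (Real.sin ((j : ℝ) * Real.pi / l) ^ 2 + Real.tan φ ^ 2) /
        (Real.sin ((j : ℝ) * Real.pi / l) ^ 2 + Real.tan φ ^ 2) ^ (α / 2 + 1) := by
    intro j
    rw [Real.rpow_add_one (hD j).ne', neg_div, Real.rpow_neg (hD j).le]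
    have := Real.rpow_pos_of_pos (hD j) (α / 2)
    have := hD j
    field_simp
  have e4 : ∑ j ∈ Finset.Icc 1 l, Real.cos ((j : ℝ) * Real.pi / l) ^ 2 /
        (Real.sin ((j : ℝ) * Real.pi / l) ^ 2 + Real.tan φ ^ 2) ^ (α / 2 + 1)
      = (∑ j ∈ Finset.Icc 1 l, (1 + Real.tan φ ^ 2) /
        (Real.sin ((j : ℝ) * Real.pi / l) ^ 2 + Real.tan φ ^ 2) ^ (α / 2 + 1))
      - ∑ j ∈ Finset.Icc 1 l,
        (Real.sin ((j : ℝ) * Real.pi / l) ^ 2 + Real.tan φ ^ 2) ^ (-α / 2) := by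
    rw [← Finset.sum_sub_distrib]
    refine Finset.sum_congr rfl fun j _ => ?_
    rw [e3, Real.cos_sq']
    ring
  rw [e4, ← Finset.mul_sum]
  ring

theorem prism_central_configuration (l : ℕ) (hl : 2 ≤ l)
    (α β : ℝ) (hα : α ∈ Set.Ioo (0 : ℝ) 2) (hβ : β = α / 2)
    (f₀ : ℝ → ℝ)
    (hf₀ : ∀ φ, f₀ φ =
      (∑ j ∈ Finset.Icc 1 (l - 1), Real.sin ((j : ℝ) * Real.pi / l) ^ (-α)) -
        ∑ j ∈ Finset.Icc 1 l,
          Real.cos ((j : ℝ) * Real.pi / l) ^ 2 /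
            (Real.sin ((j : ℝ) * Real.pi / l) ^ 2 + Real.tan φ ^ 2) ^ (β + 1)) :
    (∃! φhat : ℝ, φhat ∈ Set.Ioo 0 (Real.pi / 2) ∧ f₀ φhat = 0) ∧
    ∀ φhat : ℝ, φhat ∈ Set.Ioo 0 (Real.pi / 2) → f₀ φhat = 0 →
      deriv (fun t => dihedralU l α t φhat) 0 = 0 ∧
      deriv (fun p => dihedralU l α 0 p) φhat = 0 := by
  subst hβ
  have hA := prism_A_pos l hl α
  have hb : 0 < α / 2 := by linarith [hα.1]
  have hfG : ∀ φ, f₀ φ = prismG l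
      (∑ j ∈ Finset.Icc 1 (l - 1), Real.sin ((j : ℝ) * Real.pi / l) ^ (-α))
      (α / 2) (Real.tan φ ^ 2) := fun φ => hf₀ φ
  refine ⟨?_, ?_⟩
  · obtain ⟨T, hT, hz⟩ := prismG_root l hl _ _ hA hb
    have hs : Real.tan (Real.arctan (Real.sqrt T)) ^ 2 = T := by
      rw [Real.tan_arctan, Real.sq_sqrt hT.le]
    refine ⟨Real.arctan (Real.sqrt T), ⟨⟨?_, Real.arctan_lt_pi_div_two _⟩, ?_⟩, ?_⟩
    · exact Real.arctan_pos.2 (Real.sqrt_pos.2 hT)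
    · rw [hfG, hs, hz]
    · rintro y ⟨hy, hy0⟩
      have ht : 0 < Real.tan y := Real.tan_pos_of_pos_of_lt_pi_div_two hy.1 hy.2
      rw [hfG, ← hz] at hy0
      have h := (prismG_strictMono l hl _ _ hb).injOn
        (show Real.tan y ^ 2 ∈ Set.Ioi 0 from pow_pos ht 2) (show T ∈ Set.Ioi 0 from hT) hy0
      rw [← h, Real.sqrt_sq ht.le, Real.arctan_tan (by linarith [hy.1, Real.pi_pos]) hy.2]
  · intro φ hφ h0
    constructor
    · have h := deriv_comp_neg (f := fun t => dihedralU l α t φ) (0 : ℝ)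
      simp only [prism_theta_even l hl, neg_zero] at h
      linarith
    · rw [(prism_deriv_phi l α φ hφ).deriv, ← hfG, h0, mul_zero]
end

section
/- For every integer l ≥ 2 and every β ∈ (0,1), one has Σ_{j=1}^{l} cos²((2j−1)π/(2l)) / ( sin((2j−1)π/(2l)) )^{2(β+1)} > Σ_{j=1}^{l−1} ( sin(jπ/l) )^{−2β}. -/
open Real Finset

lemma sin_lt_sin_mid {x t : ℝ} (hx : 0 < x) (h1 : x < t) (h2 : t < π - x) :
    Real.sin x < Real.sin t := by
  rcases le_total t (π / 2) with h | h
  · exact Real.sin_lt_sin_of_lt_of_le_pi_div_two (by linarith [Real.pi_pos]) h h1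
  · rw [← Real.sin_pi_sub t]
    exact Real.sin_lt_sin_of_lt_of_le_pi_div_two (by linarith [Real.pi_pos]) (by linarith)
      (by linarith)

theorem antiprism_key_inequality (l : ℕ) (hl : 2 ≤ l) (β : ℝ) (hβ : β ∈ Set.Ioo (0 : ℝ) 1) :
    ∑ j ∈ Finset.Icc 1 l,
        Real.cos ((2 * (j : ℝ) - 1) * Real.pi / (2 * l)) ^ 2 /
          Real.sin ((2 * (j : ℝ) - 1) * Real.pi / (2 * l)) ^ (2 * (β + 1))
      > ∑ j ∈ Finset.Icc 1 (l - 1), Real.sin ((j : ℝ) * Real.pi / l) ^ (-(2 * β)) := by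
  obtain ⟨hβ0, hβ1⟩ := hβ
  have hl' : (2 : ℝ) ≤ l := by exact_mod_cast hl
  have hl0 : (0 : ℝ) < l := by linarith
  have hpi := Real.pi_pos
  obtain ⟨x, hx⟩ : ∃ x : ℝ, x = π / (2 * l) := ⟨_, rfl⟩
  have hx0 : 0 < x := by rw [hx]; positivity
  have hlx : (l : ℝ) * x = π / 2 := by rw [hx]; field_simp
  have hxpi : x < π := by nlinarith
  have hs : 0 < Real.sin x := Real.sin_pos_of_pos_of_lt_pi hx0 hxpi
  -- the terms on the left are nonnegative; keep only `j = 1`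
  have hleft : Real.cos x ^ 2 / Real.sin x ^ (2 * (β + 1)) ≤ ∑ j ∈ Finset.Icc 1 l,
        Real.cos ((2 * (j : ℝ) - 1) * Real.pi / (2 * l)) ^ 2 /
          Real.sin ((2 * (j : ℝ) - 1) * Real.pi / (2 * l)) ^ (2 * (β + 1)) := by
    have := Finset.single_le_sum (s := Finset.Icc 1 l) (a := 1)
      (f := fun j : ℕ => Real.cos ((2 * (j : ℝ) - 1) * Real.pi / (2 * l)) ^ 2 /
          Real.sin ((2 * (j : ℝ) - 1) * Real.pi / (2 * l)) ^ (2 * (β + 1))) ?_ ?_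
    · refine le_trans (le_of_eq ?_) this
      have e : (2 * ((1 : ℕ) : ℝ) - 1) * Real.pi / (2 * l) = x := by
        rw [hx]; push_cast; ring
      simp only [e]
    · intro j hj
      rw [Finset.mem_Icc] at hj
      have h1 : (1 : ℝ) ≤ j := by exact_mod_cast hj.1
      have h2 : (j : ℝ) ≤ l := by exact_mod_cast hj.2
      have : 0 ≤ Real.sin ((2 * (j : ℝ) - 1) * Real.pi / (2 * l)) := by
        have e : (2 * (j : ℝ) - 1) * Real.pi / (2 * l) = (2 * j - 1) * x := by rw [hx]; ring
        rw [e]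
        apply Real.sin_nonneg_of_nonneg_of_le_pi <;> nlinarith
      positivity
    · simp; omega
  have hright : ∑ j ∈ Finset.Icc 1 (l - 1), Real.sin ((j : ℝ) * Real.pi / l) ^ (-(2 * β))
      < ∑ j ∈ Finset.Icc 1 (l - 1), Real.sin x ^ (-(2 * β)) := by
    apply Finset.sum_lt_sum_of_nonempty
    · simp; omega
    · intro j hj
      rw [Finset.mem_Icc] at hj
      have h1 : (1 : ℝ) ≤ j := by exact_mod_cast hj.1
      have h2 : (j : ℝ) + 1 ≤ l := by
        have : j + 1 ≤ l := by omega
        exact_mod_cast this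
      have e : (j : ℝ) * Real.pi / l = 2 * j * x := by rw [hx]; field_simp
      rw [e]
      apply Real.rpow_lt_rpow_of_neg hs _ (by linarith)
      apply sin_lt_sin_mid hx0 <;> nlinarith
  have hcard : ∑ j ∈ Finset.Icc 1 (l - 1), Real.sin x ^ (-(2 * β))
      = ((l : ℝ) - 1) * Real.sin x ^ (-(2 * β)) := by
    rw [Finset.sum_const, nsmul_eq_mul, Nat.card_Icc]
    congr 1
    rw [Nat.sub_add_cancel (by omega : 1 ≤ l), Nat.cast_sub (by omega)]
    simp
  have hcos : 1 - 2 / π * (2 * x) ≤ Real.cos (2 * x) :=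
    Real.one_sub_mul_le_cos (by linarith) (by nlinarith)
  have hsq : (l : ℝ) * Real.sin x ^ 2 ≤ 1 := by
    have e : 2 / π * (2 * x) = 2 / l := by rw [hx]; field_simp
    rw [e, Real.cos_two_mul'] at hcos
    have := Real.sin_sq_add_cos_sq x
    have h3 : Real.sin x ^ 2 ≤ 1 / l := by
      have : (2 : ℝ) / l = 2 * (1 / l) := by ring
      linarith
    rw [le_div_iff₀ hl0] at h3
    linarith
  have hmain : ((l : ℝ) - 1) * Real.sin x ^ (-(2 * β)) ≤
      Real.cos x ^ 2 / Real.sin x ^ (2 * (β + 1)) := by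
    have e : Real.sin x ^ (2 * (β + 1)) = Real.sin x ^ (2 * β) * Real.sin x ^ 2 := by
      rw [← Real.rpow_natCast, ← Real.rpow_add hs]; congr 1; push_cast; ring
    have hp : 0 < Real.sin x ^ (2 * β) := Real.rpow_pos_of_pos hs _
    rw [e, Real.rpow_neg hs.le, le_div_iff₀ (by positivity)]
    have e2 : ((l : ℝ) - 1) * (Real.sin x ^ (2 * β))⁻¹ * (Real.sin x ^ (2 * β) * Real.sin x ^ 2)
      = ((l : ℝ) - 1) * Real.sin x ^ 2 := by field_simp
    rw [e2]
    linarith [Real.sin_sq_add_cos_sq x]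
  linarith
end

section
/- There exists a unique φ̂ ∈ (0, π/2) such that f_{π/(2l)}(φ̂) = 0, where f_{π/(2l)}(φ) = Σ_{j=1}^{l-1} (sin(jπ/l))^{-α} − Σ_{j=1}^{l} cos²((2j−1)π/(2l)) / (sin²((2j−1)π/(2l)) + tan²φ)^{β+1}. Moreover the point (θ, φ) = (π/(2l), φ̂) is a critical point of U, i.e. ∂U/∂θ(π/(2l), φ̂) = 0 and ∂U/∂φ(π/(2l), φ̂) = 0; this is the antiprism central configuration. -/
open Real Finset

/-- abscissae of the antiprism -/
noncomputable def antiX (l j : ℕ) : ℝ := (2 * (j : ℝ) - 1) * Real.pi / (2 * l)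

lemma antiX_pos (l j : ℕ) (hl : 2 ≤ l) (hj : j ∈ Finset.Icc 1 l) : 0 < antiX l j := by
  rw [Finset.mem_Icc] at hj
  have h1 : (1 : ℝ) ≤ j := by exact_mod_cast hj.1
  have h2 : (2 : ℝ) ≤ l := by exact_mod_cast hl
  unfold antiX
  have := Real.pi_pos
  apply div_pos
  · apply mul_pos <;> linarith
  · linarith

lemma antiX_lt (l j : ℕ) (hl : 2 ≤ l) (hj : j ∈ Finset.Icc 1 l) : antiX l j < Real.pi := by
  rw [Finset.mem_Icc] at hj
  have h1 : (j : ℝ) ≤ l := by exact_mod_cast hj.2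
  have h2 : (2 : ℝ) ≤ l := by exact_mod_cast hl
  unfold antiX
  have := Real.pi_pos
  rw [div_lt_iff₀ (by linarith)]
  nlinarith

lemma antiX_sin_pos (l j : ℕ) (hl : 2 ≤ l) (hj : j ∈ Finset.Icc 1 l) :
    0 < Real.sin (antiX l j) :=
  Real.sin_pos_of_pos_of_lt_pi (antiX_pos l j hl hj) (antiX_lt l j hl hj)

lemma sum_cos_zero (l : ℕ) (hl : 2 ≤ l) :
    ∑ j ∈ Finset.Icc 1 l, Real.cos (2 * antiX l j) = 0 := by
  have h2 : (2 : ℝ) ≤ l := by exact_mod_cast hl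
  have hp := Real.pi_pos
  have hs : 0 < Real.sin (Real.pi / l) := by
    apply Real.sin_pos_of_pos_of_lt_pi
    · positivity
    · rw [div_lt_iff₀ (by linarith)]; nlinarith
  have key : ∀ n : ℕ, 2 * Real.sin (Real.pi / l) * ∑ j ∈ Finset.Icc 1 n, Real.cos (2 * antiX l j)
      = Real.sin (2 * n * (Real.pi / l)) := by
    intro n
    induction n with
    | zero => simp
    | succ k ih =>
      rw [Finset.sum_Icc_succ_top (by omega), mul_add, ih]
      have e1 : 2 * antiX l (k+1) = 2 * k * (Real.pi / l) + Real.pi / l := by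
        unfold antiX; push_cast; field_simp; ring
      have e2 : 2 * ((k+1 : ℕ) : ℝ) * (Real.pi / l)
        = 2 * k * (Real.pi / l) + Real.pi / l + Real.pi / l := by push_cast; ring
      rw [e1, e2]
      generalize Real.pi / l = b
      generalize 2 * (k:ℝ) * b = a
      simp only [Real.sin_add, Real.cos_add]
      have := Real.sin_sq_add_cos_sq b
      linear_combination (-Real.sin a) * this
  have := key l
  have e : 2 * (l : ℝ) * (Real.pi / l) = 2 * Real.pi := by field_simp
  rw [e, Real.sin_two_pi] at this
  rcases mul_eq_zero.1 this with h | h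
  · linarith
  · exact h

lemma term_bound (α x : ℝ) (h0 : 0 < α) (hx : 0 < Real.sin x) :
    Real.sin x ^ (-α) + (2 : ℝ) ^ (α/2) * (2 * Real.cos (2 * x)) ≤
      Real.cos x ^ 2 / (Real.sin x ^ 2) ^ (α/2 + 1) := by
  set s := Real.sin x ^ 2 with hs
  have hsp : 0 < s := by positivity
  have e1 : Real.sin x ^ (-α) = s ^ (-(α/2)) := by
    rw [hs, ← Real.rpow_natCast, ← Real.rpow_mul hx.le]; congr 1; push_cast; ring
  have e2 : Real.cos x ^ 2 = 1 - s := by rw [hs, Real.cos_sq']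
  have e3 : Real.cos (2 * x) = 1 - 2 * s := by rw [Real.cos_two_mul, e2]; ring
  have e4 : s ^ (α/2+1) = s ^ (α/2) * s := by rw [Real.rpow_add hsp, Real.rpow_one]
  rw [e1, e2, e3, e4, Real.rpow_neg hsp.le]
  have e5 : (1 - s) / (s ^ (α/2) * s) = (s ^ (α/2))⁻¹ + (s ^ (α/2))⁻¹ * (s⁻¹ - 2) := by
    field_simp; ring
  rw [e5]
  have e6 : (2:ℝ) ^ (α/2) * (2 * (1 - 2 * s)) ≤ (2:ℝ) ^ (α/2) * (s⁻¹ - 2) := by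
    apply mul_le_mul_of_nonneg_left _ (by positivity)
    have : s⁻¹ - 2 - 2 * (1 - 2 * s) = (2 * s - 1)^2 / s := by field_simp; ring
    have : 0 ≤ (2 * s - 1)^2 / s := by positivity
    linarith
  have e7 : (s ^ (α/2))⁻¹ = (s⁻¹) ^ (α/2) := by rw [Real.inv_rpow hsp.le]
  have e8 : (2:ℝ) ^ (α/2) * (s⁻¹ - 2) ≤ (s ^ (α/2))⁻¹ * (s⁻¹ - 2) := by
    rw [e7]
    rcases le_total 2 s⁻¹ with h | h
    · apply mul_le_mul_of_nonneg_right _ (by linarith)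
      exact Real.rpow_le_rpow (by norm_num) h (by linarith)
    · apply mul_le_mul_of_nonpos_right _ (by linarith)
      exact Real.rpow_le_rpow (by positivity) h (by linarith)
  linarith

lemma pairing (l : ℕ) (hl : 2 ≤ l) (α : ℝ) (h0 : 0 < α) :
    (∑ j ∈ Finset.Icc 1 (l - 1), Real.sin ((j : ℝ) * Real.pi / l) ^ (-α)) <
      ∑ j ∈ Finset.Icc 1 l, Real.sin (antiX l j) ^ (-α) := by
  have h2 : (2 : ℝ) ≤ l := by exact_mod_cast hl
  have hp := Real.pi_pos
  let e : ℕ → ℕ := fun j => if j ≤ l / 2 then j else j + 1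
  have hinj : Set.InjOn e (Finset.Icc 1 (l-1) : Finset ℕ) := by
    intro a _ b _ h
    simp only [e] at h
    split_ifs at h <;> omega
  have hmem : ∀ j ∈ Finset.Icc 1 (l-1), e j ∈ Finset.Icc 1 l := by
    intro j hj
    rw [Finset.mem_Icc] at *
    simp only [e]
    split_ifs <;> omega
  have hle : ∀ j ∈ Finset.Icc 1 (l-1), Real.sin ((j : ℝ) * Real.pi / l) ^ (-α) ≤
      Real.sin (antiX l (e j)) ^ (-α) := by
    intro j hj
    apply Real.rpow_le_rpow_of_nonpos (antiX_sin_pos l _ hl (hmem j hj)) _ (by linarith)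
    rw [Finset.mem_Icc] at hj
    have hj1 : (1 : ℝ) ≤ j := by exact_mod_cast hj.1
    by_cases h : j ≤ l / 2
    · simp only [e, h, if_true]
      have hj2 : 2 * (j : ℝ) ≤ l := by exact_mod_cast (by omega : 2 * j ≤ l)
      apply Real.sin_le_sin_of_le_of_le_pi_div_two
      · have := antiX_pos l j hl (by rw [Finset.mem_Icc]; omega)
        linarith
      · rw [div_le_div_iff₀ (by linarith) (by norm_num)]; nlinarith
      · unfold antiX
        rw [div_le_div_iff₀ (by linarith) (by linarith)]
        have : 0 ≤ Real.pi * l := by positivity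
        nlinarith
    · simp only [e, h, if_false]
      have hj2 : (l : ℝ) ≤ 2 * (j : ℝ) := by exact_mod_cast (by omega : l ≤ 2 * j)
      rw [← Real.sin_pi_sub (antiX l (j+1)), ← Real.sin_pi_sub ((j : ℝ) * Real.pi / l)]
      apply Real.sin_le_sin_of_le_of_le_pi_div_two
      · have := antiX_lt l (j+1) hl (by rw [Finset.mem_Icc]; omega)
        linarith
      · have : Real.pi / 2 ≤ (j : ℝ) * Real.pi / l := by
          rw [div_le_div_iff₀ (by norm_num) (by linarith)]; nlinarith
        linarith
      · have : (j : ℝ) * Real.pi / l ≤ antiX l (j+1) := by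
          unfold antiX
          rw [div_le_div_iff₀ (by linarith) (by linarith)]
          have : 0 ≤ Real.pi * l := by positivity
          push_cast
          nlinarith
        linarith
  refine lt_of_le_of_lt (Finset.sum_le_sum hle) ?_
  rw [← Finset.sum_image (f := fun k => Real.sin (antiX l k) ^ (-α)) hinj]
  have hm : l / 2 + 1 ∈ Finset.Icc 1 l := by rw [Finset.mem_Icc]; omega
  refine Finset.sum_lt_sum_of_subset (i := l/2+1) ?_ hm ?_ ?_ ?_
  · intro k hk
    obtain ⟨j, hj, rfl⟩ := Finset.mem_image.1 hk
    exact hmem j hj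
  · intro hk
    obtain ⟨j, hj, h⟩ := Finset.mem_image.1 hk
    simp only [e] at h
    split_ifs at h <;> omega
  · exact Real.rpow_pos_of_pos (antiX_sin_pos l _ hl hm) _
  · intro k hk _
    exact (Real.rpow_pos_of_pos (antiX_sin_pos l _ hl hk) _).le

/-- the attraction sum as a function of `tan² φ` -/
noncomputable def antiH (l : ℕ) (α T : ℝ) : ℝ :=
  ∑ j ∈ Finset.Icc 1 l, Real.cos (antiX l j) ^ 2 / (Real.sin (antiX l j) ^ 2 + T) ^ (α / 2 + 1)

lemma antiH_zero (l : ℕ) (hl : 2 ≤ l) (α : ℝ) (h0 : 0 < α) :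
    (∑ j ∈ Finset.Icc 1 (l - 1), Real.sin ((j : ℝ) * Real.pi / l) ^ (-α)) < antiH l α 0 := by
  refine lt_of_lt_of_le (pairing l hl α h0) ?_
  have := Finset.sum_le_sum (fun j hj => term_bound α (antiX l j) h0 (antiX_sin_pos l j hl hj))
  rw [Finset.sum_add_distrib, ← Finset.mul_sum, ← Finset.mul_sum, sum_cos_zero l hl] at this
  unfold antiH
  simpa using this

lemma antiH_anti (l : ℕ) (hl : 2 ≤ l) (α : ℝ) (h0 : 0 < α) :
    StrictAntiOn (antiH l α) (Set.Ici 0) := by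
  intro S hS T hT hST
  have hS' : 0 ≤ S := hS
  have h2 : (2 : ℝ) ≤ l := by exact_mod_cast hl
  have hp := Real.pi_pos
  have hlt : ∀ j ∈ Finset.Icc 1 l, (Real.sin (antiX l j) ^ 2 + S) ^ (α / 2 + 1) <
      (Real.sin (antiX l j) ^ 2 + T) ^ (α / 2 + 1) := by
    intro j hj
    exact Real.rpow_lt_rpow (by positivity) (by linarith) (by linarith)
  have hpos : ∀ j ∈ Finset.Icc 1 l, 0 < (Real.sin (antiX l j) ^ 2 + S) ^ (α / 2 + 1) := by
    intro j hj
    have := antiX_sin_pos l j hl hj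
    positivity
  apply Finset.sum_lt_sum
  · intro j hj
    exact div_le_div_of_nonneg_left (by positivity) (hpos j hj) (hlt j hj).le
  · have h1 : 1 ∈ Finset.Icc 1 l := by rw [Finset.mem_Icc]; omega
    refine ⟨1, h1, ?_⟩
    have hc : 0 < Real.cos (antiX l 1) := by
      apply Real.cos_pos_of_mem_Ioo
      constructor
      · have := antiX_pos l 1 hl h1
        linarith
      · unfold antiX
        rw [div_lt_div_iff₀ (by linarith) (by norm_num)]
        push_cast
        nlinarith
    exact div_lt_div_of_pos_left (by positivity) (hpos 1 h1) (hlt 1 h1)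

lemma antiH_cont (l : ℕ) (hl : 2 ≤ l) (α : ℝ) :
    ContinuousOn (antiH l α) (Set.Ici 0) := by
  unfold antiH
  apply continuousOn_finsetSum
  intro j hj T hT
  have hT' : 0 ≤ T := hT
  have h := antiX_sin_pos l j hl hj
  have h' : Real.sin (antiX l j) ^ 2 + T ≠ 0 := by positivity
  apply ContinuousAt.continuousWithinAt
  apply ContinuousAt.div continuousAt_const
  · exact ContinuousAt.rpow_const (by fun_prop) (Or.inl h')
  · positivity

lemma one_le_A (l : ℕ) (hl : 2 ≤ l) (α : ℝ) (h0 : 0 < α) :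
    1 ≤ ∑ j ∈ Finset.Icc 1 (l - 1), Real.sin ((j : ℝ) * Real.pi / l) ^ (-α) := by
  have h2 : (2 : ℝ) ≤ l := by exact_mod_cast hl
  have hp := Real.pi_pos
  have hs : ∀ j ∈ Finset.Icc 1 (l-1), 0 < Real.sin ((j : ℝ) * Real.pi / l) := by
    intro j hj
    rw [Finset.mem_Icc] at hj
    have hj1 : (1 : ℝ) ≤ j := by exact_mod_cast hj.1
    have hj2 : (j : ℝ) < l := by exact_mod_cast (by omega : j < l)
    apply Real.sin_pos_of_pos_of_lt_pi
    · positivity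
    · rw [div_lt_iff₀ (by linarith)]; nlinarith
  have h1 : 1 ∈ Finset.Icc 1 (l-1) := by rw [Finset.mem_Icc]; omega
  refine le_trans ?_ (Finset.single_le_sum (f := fun j : ℕ => Real.sin ((j : ℝ) * Real.pi / l) ^ (-α))
    (fun j hj => (Real.rpow_pos_of_pos (hs j hj) _).le) h1)
  exact Real.one_le_rpow_of_pos_of_le_one_of_nonpos (hs 1 h1) (Real.sin_le_one _) (by linarith)

lemma antiH_large (l : ℕ) (hl : 2 ≤ l) (α : ℝ) (h0 : 0 < α) : antiH l α (2 * l) < 1 := by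
  have h2 : (2 : ℝ) ≤ l := by exact_mod_cast hl
  have hb : ∀ j ∈ Finset.Icc 1 l, Real.cos (antiX l j) ^ 2 /
      (Real.sin (antiX l j) ^ 2 + 2 * l) ^ (α / 2 + 1) ≤ 1 / (2 * l) := by
    intro j hj
    have hc : Real.cos (antiX l j) ^ 2 ≤ 1 := Real.cos_sq_le_one _
    have hs : 0 ≤ Real.sin (antiX l j) ^ 2 := by positivity
    apply div_le_div₀ (by norm_num) hc (by linarith)
    have := Real.rpow_le_rpow_of_exponent_le
      (x := Real.sin (antiX l j) ^ 2 + 2 * l) (y := 1) (z := α/2+1) (by linarith) (by linarith)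
    rw [Real.rpow_one] at this
    linarith
  have := Finset.sum_le_card_nsmul _ _ _ hb
  refine lt_of_le_of_lt this ?_
  simp only [Nat.card_Icc, Nat.add_sub_cancel, nsmul_eq_mul]
  rw [mul_one_div, div_lt_one (by linarith)]
  linarith

theorem antiprism_central_configuration (l : ℕ) (hl : 2 ≤ l)
    (α β : ℝ) (hα : α ∈ Set.Ioo (0 : ℝ) 2) (hβ : β = α / 2)
    (f : ℝ → ℝ)
    (hf : ∀ φ, f φ =
      (∑ j ∈ Finset.Icc 1 (l - 1), Real.sin ((j : ℝ) * Real.pi / l) ^ (-α)) -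
        ∑ j ∈ Finset.Icc 1 l,
          Real.cos ((2 * (j : ℝ) - 1) * Real.pi / (2 * l)) ^ 2 /
            (Real.sin ((2 * (j : ℝ) - 1) * Real.pi / (2 * l)) ^ 2 + Real.tan φ ^ 2) ^ (β + 1)) :
    (∃! φhat : ℝ, φhat ∈ Set.Ioo 0 (Real.pi / 2) ∧ f φhat = 0) ∧
    ∀ φhat : ℝ, φhat ∈ Set.Ioo 0 (Real.pi / 2) → f φhat = 0 →
      deriv (fun t => dihedralU l α t φhat) (Real.pi / (2 * l)) = 0 ∧
      deriv (fun p => dihedralU l α (Real.pi / (2 * l)) p) φhat = 0 := by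
  subst hβ
  have h0 := hα.1
  have h2 : (2 : ℝ) ≤ l := by exact_mod_cast hl
  have hp := Real.pi_pos
  have hA0 := antiH_zero l hl α h0
  have hA1 := one_le_A l hl α h0
  have hAL := antiH_large l hl α h0
  have hf' : ∀ φ, f φ = (∑ j ∈ Finset.Icc 1 (l - 1), Real.sin ((j : ℝ) * Real.pi / l) ^ (-α)) -
      antiH l α (Real.tan φ ^ 2) := hf
  simp only [dihedralU]
  generalize (∑ j ∈ Finset.Icc 1 (l - 1), Real.sin ((j : ℝ) * Real.pi / l) ^ (-α)) = A at *
  refine ⟨?_, ?_⟩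
  · have hiv := intermediate_value_Icc' (a := 0) (b := 2 * (l:ℝ)) (f := antiH l α) (by linarith)
      ((antiH_cont l hl α).mono Set.Icc_subset_Ici_self)
    obtain ⟨T, hT, hTA⟩ := hiv ⟨by linarith, hA0.le⟩
    have hT0 : 0 < T := by
      rcases hT.1.lt_or_eq with h | h
      · exact h
      · rw [← h] at hTA; linarith
    refine ⟨Real.arctan (Real.sqrt T), ⟨⟨Real.arctan_pos.2 (Real.sqrt_pos.2 hT0),
      Real.arctan_lt_pi_div_two _⟩, ?_⟩, ?_⟩
    · rw [hf', Real.tan_arctan, Real.sq_sqrt hT0.le, hTA, sub_self]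
    · rintro y ⟨hy, hfy⟩
      rw [hf'] at hfy
      have hty : 0 < Real.tan y := Real.tan_pos_of_pos_of_lt_pi_div_two hy.1 hy.2
      have : Real.tan y ^ 2 = T :=
        (antiH_anti l hl α h0).injOn (Set.mem_Ici.2 (by positivity)) (Set.mem_Ici.2 hT0.le)
          (by linarith)
      rw [← this, Real.sqrt_sq hty.le, Real.arctan_tan (by linarith [hy.1]) hy.2]
  · intro y hy hfy
    have hty : 0 < Real.tan y := Real.tan_pos_of_pos_of_lt_pi_div_two hy.1 hy.2
    have hcy : 0 < Real.cos y := Real.cos_pos_of_mem_Ioo ⟨by linarith [hy.1], hy.2⟩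
    constructor
    · set g : ℝ → ℝ := fun t => (2 * Real.cos y) ^ (-α) * (A + ∑ j ∈ Finset.Icc 1 l,
        (Real.sin ((j : ℝ) * Real.pi / l - t) ^ 2 + Real.tan y ^ 2) ^ (-α / 2)) with hg
      have hsym : (fun t => g (Real.pi / l - t)) = g := by
        funext t
        simp only [hg]
        congr 2
        refine Finset.sum_bij' (fun j _ => l + 1 - j) (fun j _ => l + 1 - j) ?_ ?_ ?_ ?_ ?_
        · intro j hj; rw [Finset.mem_Icc] at *; omega
        · intro j hj; rw [Finset.mem_Icc] at *; omega
        · intro j hj; rw [Finset.mem_Icc] at *; omega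
        · intro j hj; rw [Finset.mem_Icc] at *; omega
        · intro j hj
          rw [Finset.mem_Icc] at hj
          congr 3
          rw [Nat.cast_sub (by omega)]
          have : (((l + 1 : ℕ) : ℝ) - (j:ℝ)) * Real.pi / l - t
            = Real.pi - ((j:ℝ) * Real.pi / l - (Real.pi / l - t)) := by
            push_cast; field_simp; ring
          rw [this, Real.sin_pi_sub]
      have hd := deriv_comp_const_sub g (Real.pi / l) (Real.pi / (2 * l))
      rw [hsym] at hd
      have e : Real.pi / l - Real.pi / (2 * l) = Real.pi / (2 * l) := by field_simp; ring
      rw [e] at hd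
      linarith
    · have ex : ∀ j : ℕ, (j : ℝ) * Real.pi / l - Real.pi / (2 * l) = antiX l j := by
        intro j; unfold antiX; field_simp
      simp only [ex]
      have d1 : HasDerivAt (fun p => (2 * Real.cos p) ^ (-α))
          ((2 * -Real.sin y) * (-α) * (2 * Real.cos y) ^ (-α - 1)) y :=
        ((Real.hasDerivAt_cos y).const_mul 2).rpow_const (Or.inl (by positivity))
      have d2 : ∀ j ∈ Finset.Icc 1 l, HasDerivAt
          (fun p => (Real.sin (antiX l j) ^ 2 + Real.tan p ^ 2) ^ (-α / 2))
          ((2 * Real.tan y * (1 / Real.cos y ^ 2)) * (-α/2) *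
            (Real.sin (antiX l j) ^ 2 + Real.tan y ^ 2) ^ (-α / 2 - 1)) y := by
        intro j hj
        have hne : Real.sin (antiX l j) ^ 2 + Real.tan y ^ 2 ≠ 0 := by positivity
        have := (((Real.hasDerivAt_tan hcy.ne').pow 2).const_add
          (Real.sin (antiX l j) ^ 2)).rpow_const (p := -α/2) (Or.inl hne)
        simpa using this
      have d3 := d1.mul ((HasDerivAt.fun_sum d2).const_add A)
      refine d3.deriv.trans ?_
      rw [hf'] at hfy
      have hA : A = antiH l α (Real.tan y ^ 2) := by linarith
      have e1 : (2 * Real.cos y) ^ (-α - 1) = (2 * Real.cos y) ^ (-α) / (2 * Real.cos y) := by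
        rw [Real.rpow_sub_one (by positivity)]
      have e2 : A + ∑ j ∈ Finset.Icc 1 l,
          (Real.sin (antiX l j) ^ 2 + Real.tan y ^ 2) ^ (-α / 2)
          = (1 / Real.cos y ^ 2) * ∑ j ∈ Finset.Icc 1 l,
            (Real.sin (antiX l j) ^ 2 + Real.tan y ^ 2) ^ (-α / 2 - 1) := by
        rw [hA, antiH, ← Finset.sum_add_distrib, Finset.mul_sum]
        refine Finset.sum_congr rfl fun j hj => ?_
        set s := Real.sin (antiX l j) ^ 2 with hs
        have hcs : Real.cos (antiX l j) ^ 2 = 1 - s := by rw [hs, Real.cos_sq']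
        have hsec : 1 / Real.cos y ^ 2 = 1 + Real.tan y ^ 2 := by
          rw [Real.tan_eq_sin_div_cos]
          field_simp
          linarith [Real.sin_sq_add_cos_sq y]
        have hq : 0 < s + Real.tan y ^ 2 := by positivity
        have r1 : (s + Real.tan y ^ 2) ^ (-α / 2 - 1) = ((s + Real.tan y ^ 2) ^ (α / 2 + 1))⁻¹ := by
          rw [← Real.rpow_neg hq.le]; congr 1; ring
        have r2 : (s + Real.tan y ^ 2) ^ (-α / 2) =
            (s + Real.tan y ^ 2) ^ (-α / 2 - 1) * (s + Real.tan y ^ 2) := by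
          rw [Real.rpow_sub_one hq.ne']; field_simp
        rw [r2, r1, hcs, hsec, div_eq_mul_inv]
        ring
      rw [e2, e1, ← Finset.mul_sum, Real.tan_eq_sin_div_cos]
      field_simp
      ring
end

section
/- Suppose (θ, φ) with φ ∈ (−π/2, π/2) is not a collision point and is a critical point of U, i.e. ∂U/∂θ(θ, φ) = 0 and ∂U/∂φ(θ, φ) = 0. Then sin(2lθ) = 0, that is, θ = kπ/(2l) for some integer k. Hence every central configuration of the dihedral problem is (up to the symmetries of U) a planar regular 2l-gon (φ = 0, θ ∈ π/(2l) + (π/l)ℤ), a prism (θ ∈ (π/l)ℤ, φ ≠ 0), or an antiprism (θ ∈ π/(2l) + (π/l)ℤ, φ ≠ 0). -/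
open Real Finset

lemma prod_cosh (l : ℕ) (hl : 1 ≤ l) (η y : ℝ) :
    ∏ j ∈ Finset.range l, (2 * Real.cosh η - 2 * Real.cos (y + 2 * π * (j + 1 : ℕ) / l)) =
      2 * Real.cosh (l * η) - 2 * Real.cos (l * y) := by
  have hl0 : (l : ℂ) ≠ 0 := by exact_mod_cast (by omega : l ≠ 0)
  have hζ := Complex.isPrimitiveRoot_exp l (by omega)
  set ζ := Complex.exp (2 * π * Complex.I / l) with hζd
  have key : ∀ a b : ℝ, Complex.normSq (Complex.exp a - Complex.exp (b * Complex.I)) =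
      Real.exp a * (2 * Real.cosh a - 2 * Real.cos b) := by
    intro a b
    rw [← Complex.ofReal_exp, Complex.exp_mul_I, ← Complex.ofReal_cos, ← Complex.ofReal_sin,
      Complex.normSq_apply, Real.cosh_eq]
    simp only [Complex.sub_re, Complex.sub_im, Complex.add_re, Complex.add_im, Complex.ofReal_re,
      Complex.ofReal_im, Complex.mul_re, Complex.mul_im, Complex.I_re, Complex.I_im]
    have h1 : Real.exp a * Real.exp (-a) = 1 := by rw [← Real.exp_add]; simp
    linear_combination Real.sin_sq_add_cos_sq b - h1
  have h := X_pow_sub_C_eq_prod hζ (α := ζ * Complex.exp (y * Complex.I))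
    (a := Complex.exp (l * y * Complex.I)) (by omega) (by
      rw [mul_pow, hζ.pow_eq_one, one_mul, ← Complex.exp_nat_mul]; congr 1; ring)
  have h2 := congrArg (Polynomial.eval (Complex.exp η)) h
  simp only [Polynomial.eval_sub, Polynomial.eval_pow, Polynomial.eval_X, Polynomial.eval_C,
    Polynomial.eval_prod] at h2
  have h3 := congrArg Complex.normSq h2
  rw [map_prod] at h3
  have e1 : Complex.exp η ^ l = Complex.exp ((l * η : ℝ) : ℂ) := by
    rw [← Complex.exp_nat_mul]; simp
  have e2 : Complex.exp (l * y * Complex.I) = Complex.exp ((l * y : ℝ) * Complex.I) := by simp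
  rw [e1, e2, key] at h3
  have e3 : ∀ j ∈ Finset.range l, Complex.normSq (Complex.exp η - ζ ^ j * (ζ * Complex.exp (y * Complex.I)))
      = Real.exp η * (2 * Real.cosh η - 2 * Real.cos (y + 2 * π * (j + 1 : ℕ) / l)) := by
    intro j _
    rw [← key]
    congr 2
    rw [← mul_assoc, ← pow_succ, hζd, ← Complex.exp_nat_mul, ← Complex.exp_add]
    congr 1
    push_cast
    field_simp
    ring
  rw [Finset.prod_congr rfl e3, Finset.prod_mul_distrib, Finset.prod_const, Finset.card_range,
    ← Real.exp_nat_mul] at h3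
  exact (mul_left_cancel₀ (Real.exp_pos _).ne' h3).symm

lemma cosh_sub_cos_pos {η : ℝ} (h : 0 < η) (x : ℝ) : 0 < Real.cosh η - Real.cos x := by
  have := Real.one_lt_cosh.2 h.ne'
  linarith [Real.cos_le_one x]

lemma sum_inv (l : ℕ) (hl : 1 ≤ l) (η y : ℝ) (hη : 0 < η) :
    ∑ j ∈ Finset.range l, (Real.cosh η - Real.cos (y + 2 * π * (j + 1 : ℕ) / l))⁻¹ =
      (l * Real.sinh (l * η) / Real.sinh η) * (Real.cosh (l * η) - Real.cos (l * y))⁻¹ := by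
  have hl0 : (0 : ℝ) < l := by exact_mod_cast hl
  have hs := Real.sinh_pos_iff.2 hη
  have hf : (fun t => ∏ j ∈ Finset.range l, (2 * Real.cosh t - 2 * Real.cos (y + 2 * π * (j + 1 : ℕ) / l))) =
      fun t => 2 * Real.cosh (l * t) - 2 * Real.cos (l * y) := by
    funext t; exact prod_cosh l hl t y
  have h := congrFun (congrArg logDeriv hf) η
  have hd : ∀ c : ℝ, HasDerivAt (fun t => 2 * Real.cosh t - c) (2 * Real.sinh η) η := fun c =>
    ((Real.hasDerivAt_cosh η).const_mul 2).sub_const c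
  have hd2 : HasDerivAt (fun t => 2 * Real.cosh (l * t) - 2 * Real.cos (l * y))
      (2 * (Real.sinh (l * η) * (l * 1))) η :=
    ((((hasDerivAt_id η).const_mul (l : ℝ)).cosh).const_mul 2).sub_const _
  rw [logDeriv_prod, logDeriv_apply, hd2.deriv] at h
  · simp only [logDeriv_apply, (hd _).deriv] at h
    have h1 := cosh_sub_cos_pos (mul_pos hl0 hη) (l * y)
    have h2 : ∀ j ∈ Finset.range l, 2 * Real.sinh η / (2 * Real.cosh η - 2 * Real.cos (y + 2 * π * (j + 1 : ℕ) / l))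
        = Real.sinh η * (Real.cosh η - Real.cos (y + 2 * π * (j + 1 : ℕ) / l))⁻¹ := by
      intro j _
      have := cosh_sub_cos_pos hη (y + 2 * π * (j + 1 : ℕ) / l)
      rw [← mul_sub, mul_div_mul_left _ _ two_ne_zero, div_eq_mul_inv]
    rw [Finset.sum_congr rfl h2, ← Finset.mul_sum, ← mul_sub, mul_div_mul_left _ _ two_ne_zero] at h
    apply mul_left_cancel₀ hs.ne'
    rw [h]
    field_simp
  · intro j _
    have := cosh_sub_cos_pos hη (y + 2 * π * (j + 1 : ℕ) / l)
    intro h0; linarith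
  · intro j _
    exact (hd _).differentiableAt

lemma sum_sin (l : ℕ) (hl : 1 ≤ l) (z y : ℝ) (hz : 1 < z) :
    ∃ C : ℝ, 0 < C ∧ ∑ j ∈ Finset.range l, Real.sin (y + 2 * π * (j + 1 : ℕ) / l) /
      (z - Real.cos (y + 2 * π * (j + 1 : ℕ) / l)) ^ 2 = C * Real.sin (l * y) := by
  have hl0 : (0 : ℝ) < l := by exact_mod_cast hl
  obtain ⟨η, hη, rfl⟩ : ∃ η, 0 < η ∧ Real.cosh η = z :=
    ⟨Real.arcosh z, Real.arcosh_pos hz, Real.cosh_arcosh hz.le⟩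
  have hs := Real.sinh_pos_iff.2 hη
  have hs2 := Real.sinh_pos_iff.2 (mul_pos hl0 hη)
  have h1 := cosh_sub_cos_pos (mul_pos hl0 hη) (l * y)
  refine ⟨(l * Real.sinh (l * η) / Real.sinh η) * l / (Real.cosh (l * η) - Real.cos (l * y)) ^ 2,
    by positivity, ?_⟩
  have hd1 : HasDerivAt (fun y => ∑ j ∈ Finset.range l, (Real.cosh η - Real.cos (y + 2 * π * (j + 1 : ℕ) / l))⁻¹)
     (∑ j ∈ Finset.range l, -(-(-Real.sin (y + 2 * π * (j + 1 : ℕ) / l) * 1)) / (Real.cosh η - Real.cos (y + 2 * π * (j + 1 : ℕ) / l)) ^ 2) y := by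
    apply HasDerivAt.fun_sum
    intro j _
    exact ((((hasDerivAt_id y).add_const _).cos).const_sub _).inv (cosh_sub_cos_pos hη _).ne'
  have hd2 : HasDerivAt (fun y => (l * Real.sinh (l * η) / Real.sinh η) * (Real.cosh (l * η) - Real.cos (l * y))⁻¹)
      ((l * Real.sinh (l * η) / Real.sinh η) * (-(-(-Real.sin (l * y) * (l * 1))) / (Real.cosh (l * η) - Real.cos (l * y)) ^ 2)) y :=
    (((((hasDerivAt_id y).const_mul (l : ℝ)).cos).const_sub _).inv h1.ne').const_mul _
  have hf := funext (fun y => sum_inv l hl η y hη)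
  rw [hf] at hd1
  have := hd1.unique hd2
  simp only [neg_neg, mul_one, neg_div, Finset.sum_neg_distrib, neg_mul, mul_neg, neg_inj] at this
  rw [this]; ring


lemma intble (β x : ℝ) (hβ0 : 0 < β) (hβ : β < 1) (hx : 0 < x) :
    MeasureTheory.IntegrableOn (fun u : ℝ => u ^ (-β) / (x + u) ^ 2) (Set.Ioi 0) := by
  have hm : Measurable (fun u : ℝ => u ^ (-β) / (x + u) ^ 2) := by fun_prop
  rw [← Set.Ioc_union_Ioi_eq_Ioi (zero_le_one' ℝ)]
  apply MeasureTheory.IntegrableOn.union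
  · have h1 : MeasureTheory.IntegrableOn (fun u : ℝ => u ^ (-β) / x ^ 2) (Set.Ioc 0 1) := by
      have := intervalIntegral.intervalIntegrable_rpow' (a := 0) (b := 1) (r := -β) (by linarith)
      rw [intervalIntegrable_iff_integrableOn_Ioc_of_le zero_le_one] at this
      exact this.div_const _
    refine MeasureTheory.Integrable.mono' h1 hm.aestronglyMeasurable ?_
    filter_upwards [MeasureTheory.self_mem_ae_restrict measurableSet_Ioc] with u hu
    have hu0 : 0 < u := hu.1
    rw [Real.norm_of_nonneg (by positivity)]
    gcongr
    linarith
  · have h1 := integrableOn_Ioi_rpow_of_lt (a := -β - 2) (c := 1) (by linarith) one_pos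
    refine MeasureTheory.Integrable.mono' h1 hm.aestronglyMeasurable ?_
    filter_upwards [MeasureTheory.self_mem_ae_restrict measurableSet_Ioi] with u hu
    have hu0 : 0 < u := lt_trans one_pos hu
    rw [Real.norm_of_nonneg (by positivity), Real.rpow_sub hu0, Real.rpow_two]
    gcongr
    linarith

lemma scale (β x : ℝ) (hx : 0 < x) :
    ∫ u in Set.Ioi (0 : ℝ), u ^ (-β) / (x + u) ^ 2 =
      x ^ (-β - 1) * ∫ u in Set.Ioi (0 : ℝ), u ^ (-β) / (1 + u) ^ 2 := by
  have h := MeasureTheory.integral_comp_mul_left_Ioi (fun u : ℝ => u ^ (-β) / (x + u) ^ 2) 0 hx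
  rw [mul_zero, smul_eq_mul] at h
  have h2 : ∫ u in Set.Ioi (0 : ℝ), (x * u) ^ (-β) / (x + x * u) ^ 2 =
      ∫ u in Set.Ioi (0 : ℝ), (x ^ (-β) / x ^ 2) * (u ^ (-β) / (1 + u) ^ 2) := by
    apply MeasureTheory.setIntegral_congr_fun measurableSet_Ioi
    intro u hu
    have hu0 : (0 : ℝ) < u := hu
    simp only
    rw [Real.mul_rpow hx.le hu0.le]
    field_simp
  rw [h2, MeasureTheory.integral_const_mul] at h
  rw [Real.rpow_sub hx, Real.rpow_one]
  field_simp at h ⊢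
  linarith

lemma final (l : ℕ) (β c : ℝ) (hβ0 : 0 < β) (hβ : β < 1) (hc : 1 ≤ c) (s r : ℕ → ℝ)
    (S : ℝ) (hr : ∀ j ∈ Finset.range l, 0 < c - r j)
    (hS : ∀ z : ℝ, 1 < z → ∃ C : ℝ, 0 < C ∧ ∑ j ∈ Finset.range l, s j / (z - r j) ^ 2 = C * S)
    (h : ∑ j ∈ Finset.range l, s j * ((c - r j) / 2) ^ (-β - 1) = 0) : S = 0 := by
  by_contra hne
  have hi : ∀ j ∈ Finset.range l, MeasureTheory.IntegrableOn
      (fun u : ℝ => S * s j * (u ^ (-β) / ((c - r j) / 2 + u) ^ 2)) (Set.Ioi 0) := fun j hj =>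
    (intble β _ hβ0 hβ (half_pos (hr j hj))).const_mul _
  have h0 : ∫ u in Set.Ioi (0 : ℝ), ∑ j ∈ Finset.range l,
      S * s j * (u ^ (-β) / ((c - r j) / 2 + u) ^ 2) = 0 := by
    rw [MeasureTheory.integral_finsetSum _ hi]
    have : ∀ j ∈ Finset.range l, ∫ u in Set.Ioi (0 : ℝ),
        S * s j * (u ^ (-β) / ((c - r j) / 2 + u) ^ 2) =
        (S * ∫ u in Set.Ioi (0 : ℝ), u ^ (-β) / (1 + u) ^ 2) *
          (s j * ((c - r j) / 2) ^ (-β - 1)) := by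
      intro j hj
      rw [MeasureTheory.integral_const_mul, scale β _ (half_pos (hr j hj))]
      ring
    rw [Finset.sum_congr rfl this, ← Finset.mul_sum, h, mul_zero]
  have hpos : ∀ u ∈ Set.Ioi (0 : ℝ), 0 < ∑ j ∈ Finset.range l,
      S * s j * (u ^ (-β) / ((c - r j) / 2 + u) ^ 2) := by
    intro u hu
    have hu0 : (0 : ℝ) < u := hu
    obtain ⟨C, hC, hCS⟩ := hS (c + 2 * u) (by linarith)
    have : ∀ j ∈ Finset.range l, S * s j * (u ^ (-β) / ((c - r j) / 2 + u) ^ 2) =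
        (4 * S * u ^ (-β)) * (s j / (c + 2 * u - r j) ^ 2) := by
      intro j hj
      have := hr j hj
      have e : (c - r j) / 2 + u = (c + 2 * u - r j) / 2 := by ring
      have : 0 < c + 2 * u - r j := by linarith
      rw [e]; field_simp; ring
    rw [Finset.sum_congr rfl this, ← Finset.mul_sum, hCS]
    have : 4 * S * u ^ (-β) * (C * S) = 4 * u ^ (-β) * C * S ^ 2 := by ring
    rw [this]
    positivity
  have hp := (MeasureTheory.setIntegral_pos_iff_support_of_nonneg_ae (by
    filter_upwards [MeasureTheory.self_mem_ae_restrict measurableSet_Ioi] with u hu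
    exact (hpos u hu).le) (MeasureTheory.integrable_finsetSum _ hi)).2 (by
      rw [Set.inter_eq_right.2 (fun u hu => Function.mem_support.2 (hpos u hu).ne')]
      simp)
  exact hp.ne' h0

theorem classification_of_central_configurations (l : ℕ) (hl : 2 ≤ l)
    (α : ℝ) (hα : α ∈ Set.Ioo (0 : ℝ) 2)
    (θ φ : ℝ) (hφ : φ ∈ Set.Ioo (-(Real.pi / 2)) (Real.pi / 2))
    (hnc : ¬(φ = 0 ∧ ∃ k : ℤ, θ = (k : ℝ) * (Real.pi / l)))
    (h1 : deriv (fun t => dihedralU l α t φ) θ = 0)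
    (h2 : deriv (fun p => dihedralU l α θ p) φ = 0) :
    Real.sin (2 * l * θ) = 0 ∧ (∃ k : ℤ, θ = (k : ℝ) * (Real.pi / (2 * l))) ∧
    ((φ = 0 ∧ ∃ k : ℤ, θ = Real.pi / (2 * l) + (k : ℝ) * (Real.pi / l)) ∨
      ((∃ k : ℤ, θ = (k : ℝ) * (Real.pi / l)) ∧ φ ≠ 0) ∨
      ((∃ k : ℤ, θ = Real.pi / (2 * l) + (k : ℝ) * (Real.pi / l)) ∧ φ ≠ 0)) := by
  have hl0 : (0 : ℝ) < l := by exact_mod_cast (by omega : 0 < l)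
  obtain ⟨hα0, hα2⟩ := hα
  have hcos : 0 < Real.cos φ := Real.cos_pos_of_mem_Ioo hφ
  -- no collision
  have hpos : ∀ j : ℕ, 0 < Real.sin ((j : ℝ) * Real.pi / l - θ) ^ 2 + Real.tan φ ^ 2 := by
    intro j
    by_contra hle
    have hs : Real.sin ((j : ℝ) * Real.pi / l - θ) = 0 := by
      nlinarith [sq_nonneg (Real.sin ((j : ℝ) * Real.pi / l - θ)), sq_nonneg (Real.tan φ)]
    have ht : Real.tan φ = 0 := by
      nlinarith [sq_nonneg (Real.sin ((j : ℝ) * Real.pi / l - θ)), sq_nonneg (Real.tan φ)]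
    apply hnc
    constructor
    · rw [Real.tan_eq_sin_div_cos, div_eq_zero_iff] at ht
      have hs0 := ht.resolve_right hcos.ne'
      exact (Real.sin_eq_zero_iff_of_lt_of_lt (by linarith [hφ.1, Real.pi_pos])
        (by linarith [hφ.2, Real.pi_pos])).1 hs0
    · obtain ⟨n, hn⟩ := Real.sin_eq_zero_iff.1 hs
      refine ⟨j - n * l, ?_⟩
      push_cast
      have : θ = (j : ℝ) * Real.pi / l - n * π := by linarith
      rw [this]; field_simp
  have hsq : ∀ x : ℝ, Real.sin x ^ 2 + Real.tan φ ^ 2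
      = ((1 + 2 * Real.tan φ ^ 2) - Real.cos (2 * x)) / 2 := by
    intro x
    rw [Real.cos_two_mul, Real.cos_sq']; ring
  have harg : ∀ j : ℕ, (-2 * θ) + 2 * π * (j + 1 : ℕ) / l
      = 2 * (((j + 1 : ℕ) : ℝ) * Real.pi / l - θ) := by
    intro j; ring
  have hderiv : HasDerivAt (fun t => dihedralU l α t φ)
      ((2 * Real.cos φ) ^ (-α) * (∑ j ∈ Finset.Icc 1 l,
        (2 * Real.sin ((j : ℝ) * Real.pi / l - θ) ^ (2 - 1) *
          (Real.cos ((j : ℝ) * Real.pi / l - θ) * (-1))) * (-α / 2) *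
        (Real.sin ((j : ℝ) * Real.pi / l - θ) ^ 2 + Real.tan φ ^ 2) ^ (-α / 2 - 1))) θ := by
    unfold dihedralU
    apply HasDerivAt.const_mul
    apply HasDerivAt.const_add
    apply HasDerivAt.fun_sum
    intro j _
    exact (((((hasDerivAt_id θ).const_sub _).sin).pow 2).add_const _).rpow_const
      (Or.inl (hpos j).ne')
  rw [hderiv.deriv] at h1
  have hc0 : (2 * Real.cos φ) ^ (-α) ≠ 0 := (Real.rpow_pos_of_pos (by positivity) _).ne'
  have h1' := (mul_eq_zero.1 h1).resolve_left hc0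
  rw [← Finset.Ico_add_one_right_eq_Icc, Finset.sum_Ico_eq_sum_range] at h1'
  have hS := final l (α / 2) (1 + 2 * Real.tan φ ^ 2) (by linarith) (by linarith)
    (by nlinarith [sq_nonneg (Real.tan φ)])
    (fun j => Real.sin ((-2 * θ) + 2 * π * (j + 1 : ℕ) / l))
    (fun j => Real.cos ((-2 * θ) + 2 * π * (j + 1 : ℕ) / l))
    (Real.sin (l * (-2 * θ)))
    (by
      intro j _
      have := hpos (j + 1)
      rw [hsq] at this
      simp only [harg]
      linarith)
    (fun z hz => sum_sin l (by omega) z (-2 * θ) hz)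
    (by
      simp only [harg, ← hsq, Real.sin_two_mul]
      have h3 : ∑ j ∈ Finset.range l, (α / 2) * (2 * Real.sin (((j + 1 : ℕ) : ℝ) * Real.pi / l - θ) *
          Real.cos (((j + 1 : ℕ) : ℝ) * Real.pi / l - θ) *
          (Real.sin (((j + 1 : ℕ) : ℝ) * Real.pi / l - θ) ^ 2 + Real.tan φ ^ 2) ^ (-(α / 2) - 1)) = 0 := by
        rw [← h1']
        apply Finset.sum_congr (by simp)
        intro j _
        rw [add_comm j 1, neg_div]
        ring
      rw [← Finset.mul_sum] at h3
      exact (mul_eq_zero.1 h3).resolve_left (by linarith))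
  have hsin : Real.sin (2 * l * θ) = 0 := by
    have : (l : ℝ) * (-2 * θ) = -(2 * l * θ) := by ring
    rw [this, Real.sin_neg] at hS
    linarith
  obtain ⟨n, hn⟩ := Real.sin_eq_zero_iff.1 hsin
  have hθ : θ = n * (π / (2 * l)) := by
    field_simp; linarith
  refine ⟨hsin, ⟨n, hθ⟩, ?_⟩
  rcases Int.even_or_odd' n with ⟨k, hk | hk⟩
  · have hk' : ∃ k : ℤ, θ = (k : ℝ) * (Real.pi / l) := by
      refine ⟨k, ?_⟩
      rw [hθ, hk]; push_cast; field_simp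
    exact Or.inr (Or.inl ⟨hk', fun h => hnc ⟨h, hk'⟩⟩)
  · have hk' : ∃ k : ℤ, θ = Real.pi / (2 * l) + (k : ℝ) * (Real.pi / l) := by
      refine ⟨k, ?_⟩
      rw [hθ, hk]; push_cast; field_simp; ring
    by_cases h : φ = 0
    · exact Or.inl ⟨h, hk'⟩
    · exact Or.inr (Or.inr ⟨hk', h⟩)
end

section
/- Suppose (θ̄, φ̄) with φ̄ ∈ (−π/2, π/2) is not a collision point and is a critical point of U (both partial derivatives vanish there). Then ∂²U/∂θ²(θ̄, φ̄) ≠ 0, ∂²U/∂φ²(θ̄, φ̄) ≠ 0, and the mixed partial ∂²U/∂θ∂φ(θ̄, φ̄) = 0; hence the Hessian matrix of U at (θ̄, φ̄) is nonsingular. Consequently every equilibrium point of the blown-up flow is hyperbolic. -/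
open Real Finset Matrix

lemma poisson_sum (l : ℕ) (hl : 2 ≤ l) (w : ℂ) (hw : ‖w‖ < 1) :
    ∑ j ∈ range l, (1 - w * Complex.exp (2 * π * Complex.I / l) ^ j)⁻¹ = l * (1 - w ^ l)⁻¹ := by
  have hl0 : l ≠ 0 := by omega
  have hz := Complex.isPrimitiveRoot_exp l hl0
  set z := Complex.exp (2 * π * Complex.I / l) with hzdef
  have hzn : ‖z‖ = 1 := hz.norm'_eq_one hl0
  have hwl : 1 - w ^ l ≠ 0 := by
    intro h
    have : ‖w ^ l‖ < 1 := by rw [norm_pow]; exact pow_lt_one₀ (norm_nonneg _) hw hl0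
    rw [← sub_eq_zero.1 h] at this
    simp at this
  have h1 : ∀ j, (1 - w * z ^ j)⁻¹ = (∑ k ∈ range l, (w * z ^ j) ^ k) * (1 - w ^ l)⁻¹ := by
    intro j
    have h2 : 1 - w * z ^ j ≠ 0 := by
      intro h
      have : ‖w * z ^ j‖ < 1 := by rw [norm_mul, norm_pow, hzn]; simpa using hw
      rw [← sub_eq_zero.1 h] at this
      simp at this
    have h3 := mul_neg_geom_sum (w * z ^ j) l
    have h4 : (w * z ^ j) ^ l = w ^ l := by
      rw [mul_pow, ← pow_mul, mul_comm j l, pow_mul, hz.pow_eq_one]; simp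
    rw [h4] at h3
    field_simp
    linear_combination -h3
  simp_rw [h1]
  rw [← Finset.sum_mul, Finset.sum_comm]
  congr 1
  rw [Finset.sum_eq_single 0]
  · simp
  · intro k hk hk0
    have hk' := Finset.mem_range.1 hk
    have h5 : z ^ k ≠ 1 := hz.pow_ne_one_of_pos_of_lt hk0 hk'
    have h6 : ∑ j ∈ range l, (z ^ k) ^ j = 0 := by
      have := mul_neg_geom_sum (z ^ k) l
      rw [← pow_mul, mul_comm k l, pow_mul, hz.pow_eq_one] at this
      simp only [one_pow, sub_self, mul_eq_zero] at this
      rcases this with h | h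
      · exact absurd (sub_eq_zero.1 h).symm h5
      · exact h
    rw [← mul_zero (w ^ k), ← h6, Finset.mul_sum]
    refine Finset.sum_congr rfl fun j _ => ?_
    rw [mul_pow, ← pow_mul, ← pow_mul, mul_comm j k]
  · intro h
    exact absurd (Finset.mem_range.2 (by omega)) h

lemma re_inv (r ψ : ℝ) :
    (1 - r * Complex.exp (ψ * Complex.I))⁻¹.re = (1 - r * cos ψ) / (1 + r ^ 2 - 2 * r * cos ψ) := by
  rw [Complex.inv_re, Complex.normSq_apply]
  simp only [Complex.sub_re, Complex.sub_im, Complex.mul_re, Complex.mul_im, Complex.one_re, Complex.one_im,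
    Complex.exp_ofReal_mul_I_re, Complex.exp_ofReal_mul_I_im, Complex.ofReal_re, Complex.ofReal_im]
  congr 1
  · ring
  · nlinarith [sin_sq_add_cos_sq ψ]

lemma den_pos (r c : ℝ) (hr : 0 < r) (hr1 : r < 1) (hc : c ≤ 1) :
    0 < 1 + r ^ 2 - 2 * r * c := by
  nlinarith [sq_pos_of_pos (sub_pos.2 hr1)]

lemma poisson_real (l : ℕ) (hl : 2 ≤ l) (r ψ : ℝ) (hr : 0 < r) (hr1 : r < 1) :
    ∑ j ∈ range l, (1 - r ^ 2) / (1 + r ^ 2 - 2 * r * cos (ψ + j * (2 * π / l)))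
      = l * ((1 - (r ^ l) ^ 2) / (1 + (r ^ l) ^ 2 - 2 * r ^ l * cos (l * ψ))) := by
  have hl0 : l ≠ 0 := by omega
  have hlr : (l : ℂ) ≠ 0 := by exact_mod_cast hl0
  have key := poisson_sum l hl (r * Complex.exp (ψ * Complex.I)) (by
    rw [norm_mul, Complex.norm_exp_ofReal_mul_I, Complex.norm_real, norm_of_nonneg hr.le]; simpa using hr1)
  have hR : 0 < r ^ l := pow_pos hr l
  have hR1 : r ^ l < 1 := pow_lt_one₀ hr.le hr1 hl0
  have e1 : ∀ j : ℕ, (r : ℂ) * Complex.exp (ψ * Complex.I) * Complex.exp (2 * π * Complex.I / l) ^ j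
      = r * Complex.exp ((ψ + j * (2 * π / l) : ℝ) * Complex.I) := by
    intro j
    rw [mul_assoc, ← Complex.exp_nat_mul, ← Complex.exp_add]
    congr 2
    push_cast
    field_simp
  have e2 : ((r : ℂ) * Complex.exp (ψ * Complex.I)) ^ l
      = ((r ^ l : ℝ) : ℂ) * Complex.exp ((l * ψ : ℝ) * Complex.I) := by
    rw [mul_pow, ← Complex.exp_nat_mul]
    push_cast
    congr 2
    ring
  simp_rw [e1, e2] at key
  have key2 := congrArg Complex.re key
  rw [Complex.re_sum, ← Complex.ofReal_natCast, Complex.re_ofReal_mul, re_inv] at key2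
  simp_rw [re_inv] at key2
  have e3 : ∀ (r c : ℝ), 0 < r → r < 1 → c ≤ 1 → (1 - r ^ 2) / (1 + r ^ 2 - 2 * r * c)
      = 2 * ((1 - r * c) / (1 + r ^ 2 - 2 * r * c)) - 1 := by
    intro r c h h1 h2
    have := den_pos r c h h1 h2
    have hne := this.ne'
    rw [div_eq_iff hne, sub_mul, mul_assoc, div_mul_cancel₀ _ hne]
    ring
  rw [e3 _ _ hR hR1 (cos_le_one _), Finset.sum_congr rfl fun j _ => e3 _ _ hr hr1 (cos_le_one _),
    Finset.sum_sub_distrib, ← Finset.mul_sum, key2]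
  simp
  ring

open MeasureTheory in
lemma stieltjes (β : ℝ) (h0 : 0 < β) (h1 : β < 1) : ∃ K : ℝ, 0 < K ∧ ∀ x : ℝ, 0 < x →
    IntegrableOn (fun t : ℝ => t ^ (-β) * (t + x)⁻¹) (Set.Ioi 0) ∧
    ∫ t in Set.Ioi (0:ℝ), t ^ (-β) * (t + x)⁻¹ = K * x ^ (-β) := by
  have hp : (1 - β) ∈ Set.Ioo (0:ℝ) 1 := ⟨by linarith, by linarith⟩
  refine ⟨_, Real.integral_rpowIntegrand₀₁_one_pos hp, fun x hx => ?_⟩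
  have hi := Real.integrableOn_rpowIntegrand₀₁_Ioi hp hx.le
  have hv := Real.integral_rpowIntegrand₀₁_eq_rpow_mul_const hp hx.le
  have he : Set.EqOn (fun t => x⁻¹ * Real.rpowIntegrand₀₁ (1 - β) t x)
      (fun t : ℝ => t ^ (-β) * (t + x)⁻¹) (Set.Ioi 0) := by
    intro t ht
    have ht' : 0 < t := ht
    simp only
    rw [Real.rpowIntegrand₀₁_eq_pow_div hp ht'.le hx.le, show 1 - β - 1 = -β by ring]
    have : t + x ≠ 0 := by positivity
    field_simp
  constructor
  · refine IntegrableOn.congr_fun ?_ he measurableSet_Ioi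
    exact hi.const_mul _
  · rw [← setIntegral_congr_fun measurableSet_Ioi he, integral_const_mul, hv,
      sub_eq_add_neg, rpow_add hx, rpow_one]
    field_simp

/-- radius -/
noncomputable def rad (T s : ℝ) : ℝ := (2 * s + 2 * T + 1) - √((2 * s + 2 * T + 1) ^ 2 - 1)

lemma rad_spec (T s : ℝ) (hT : 0 ≤ T) (hs : 0 < s) : 0 < rad T s ∧ rad T s < 1 ∧
    1 + rad T s ^ 2 = 2 * rad T s * (2 * s + 2 * T + 1) := by
  unfold rad
  set y := 2 * s + 2 * T + 1 with hy
  have hy1 : 1 < y := by linarith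
  have hq : 0 < y ^ 2 - 1 := by nlinarith
  have h2 : √(y ^ 2 - 1) ^ 2 = y ^ 2 - 1 := Real.sq_sqrt hq.le
  have h3 : 0 < √(y ^ 2 - 1) := Real.sqrt_pos.2 hq
  refine ⟨?_, ?_, ?_⟩
  · nlinarith
  · nlinarith
  · nlinarith

/-- numerator -/
noncomputable def Bnum (l : ℕ) (T s : ℝ) : ℝ :=
  4 * rad T s * (l * (1 - (rad T s ^ l) ^ 2)) / (1 - rad T s ^ 2)

lemma kernel_sum (l : ℕ) (hl : 2 ≤ l) (T s t : ℝ) (hT : 0 ≤ T) (hs : 0 < s) :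
    ∑ j ∈ range l, (s + (sin (j * (π / l) + t) ^ 2 + T))⁻¹
      = Bnum l T s / (1 + (rad T s ^ l) ^ 2 - 2 * rad T s ^ l * cos (2 * l * t)) := by
  obtain ⟨h0, h1, h2⟩ := rad_spec T s hT hs
  unfold Bnum
  set r := rad T s
  have hp := poisson_real l hl r (2 * t) h0 h1
  have hr2 : 0 < 1 - r ^ 2 := by nlinarith
  have e : ∀ j ∈ range l, (s + (sin (j * (π / l) + t) ^ 2 + T))⁻¹ =
      (4 * r / (1 - r ^ 2)) * ((1 - r ^ 2) / (1 + r ^ 2 - 2 * r * cos (2 * t + j * (2 * π / l)))) := by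
    intro j _
    have hc : cos (2 * t + j * (2 * π / l)) = 1 - 2 * sin (j * (π / l) + t) ^ 2 := by
      rw [show 2 * t + j * (2 * π / l) = 2 * (j * (π / l) + t) by ring, cos_two_mul, cos_sq']
      ring
    have hd : 1 + r ^ 2 - 2 * r * cos (2 * t + j * (2 * π / l))
        = 4 * r * (s + (sin (j * (π / l) + t) ^ 2 + T)) := by
      rw [hc]; linear_combination h2
    rw [hd]
    have : 0 < s + (sin (j * (π / l) + t) ^ 2 + T) := by positivity
    field_simp
  rw [Finset.sum_congr rfl e, ← Finset.mul_sum, hp, show (l:ℝ) * (2 * t) = 2 * l * t by ring]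
  ring

lemma Bnum_pos (l : ℕ) (hl : 2 ≤ l) (T s : ℝ) (hT : 0 ≤ T) (hs : 0 < s) : 0 < Bnum l T s := by
  obtain ⟨h0, h1, h2⟩ := rad_spec T s hT hs
  have hR : 0 < rad T s ^ l := pow_pos h0 l
  have hR1 : rad T s ^ l < 1 := pow_lt_one₀ h0.le h1 (by omega)
  have : (0:ℝ) < l := by exact_mod_cast (by omega : 0 < l)
  unfold Bnum
  have a1 : 0 < 1 - (rad T s ^ l) ^ 2 := by nlinarith
  have a2 : 0 < 1 - rad T s ^ 2 := by nlinarith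
  positivity

/-- the folded sum -/
noncomputable def Gsum (l : ℕ) (β T t : ℝ) : ℝ :=
  ∑ j ∈ range l, (sin (j * (π / l) + t) ^ 2 + T) ^ (-β)

open MeasureTheory in
lemma kernel_ineq (l : ℕ) (hl : 2 ≤ l) (β T : ℝ) (h0 : 0 < β) (h1 : β < 1) (hT : 0 ≤ T)
    (ta : ℝ) (hta : ∀ j ∈ range l, 0 < sin (j * (π / l) + ta) ^ 2 + T) :
    ∃ κ : ℝ, 0 < κ ∧ ∀ t1 t2 : ℝ, (∀ j ∈ range l, 0 < sin (j * (π / l) + t1) ^ 2 + T) →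
      (∀ j ∈ range l, 0 < sin (j * (π / l) + t2) ^ 2 + T) →
      κ * (cos (2 * l * t1) - cos (2 * l * t2)) ^ 2 ≤
        (Gsum l β T t1 - Gsum l β T t2) * (cos (2 * l * t1) - cos (2 * l * t2)) := by
  obtain ⟨K, hK, hrep⟩ := stieltjes β h0 h1
  -- representation of the sum
  have rep : ∀ t : ℝ, (∀ j ∈ range l, 0 < sin (j * (π / l) + t) ^ 2 + T) →
      IntegrableOn (fun s : ℝ => s ^ (-β) * (Bnum l T s /
        (1 + (rad T s ^ l) ^ 2 - 2 * rad T s ^ l * cos (2 * l * t)))) (Set.Ioi 0) ∧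
      ∫ s in Set.Ioi (0:ℝ), s ^ (-β) * (Bnum l T s /
        (1 + (rad T s ^ l) ^ 2 - 2 * rad T s ^ l * cos (2 * l * t))) = K * Gsum l β T t := by
    intro t ht
    have he : Set.EqOn (fun s : ℝ => ∑ j ∈ range l, s ^ (-β) * (s + (sin (j * (π / l) + t) ^ 2 + T))⁻¹)
      (fun s : ℝ => s ^ (-β) * (Bnum l T s /
        (1 + (rad T s ^ l) ^ 2 - 2 * rad T s ^ l * cos (2 * l * t)))) (Set.Ioi 0) := by
      intro s hs
      simp only
      rw [← Finset.mul_sum, kernel_sum l hl T s t hT hs]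
    constructor
    · refine IntegrableOn.congr_fun ?_ he measurableSet_Ioi
      exact integrable_finsetSum _ fun j hj => (hrep _ (ht j hj)).1
    · rw [← setIntegral_congr_fun measurableSet_Ioi he,
        integral_finsetSum _ fun j hj => (hrep _ (ht j hj)).1, Gsum, Finset.mul_sum]
      exact Finset.sum_congr rfl fun j hj => (hrep _ (ht j hj)).2
  have hDle : ∀ s t : ℝ, 0 < s → 0 < 1 + (rad T s ^ l) ^ 2 - 2 * rad T s ^ l * cos (2 * l * t) ∧
      1 + (rad T s ^ l) ^ 2 - 2 * rad T s ^ l * cos (2 * l * t) ≤ 4 := by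
    intro s t hs
    obtain ⟨g0, g1, g2⟩ := rad_spec T s hT hs
    have hR : 0 < rad T s ^ l := pow_pos g0 l
    have hR1 : rad T s ^ l < 1 := pow_lt_one₀ g0.le g1 (by omega)
    refine ⟨den_pos _ _ hR hR1 (cos_le_one _), ?_⟩
    nlinarith [neg_one_le_cos (2 * l * t)]
  set k : ℝ → ℝ := fun s => s ^ (-β) * (Bnum l T s * rad T s ^ l / 8) with hk
  have hkpos : ∀ s ∈ Set.Ioi (0:ℝ), 0 < k s := by
    intro s hs
    have hs' : 0 < s := hs
    have := Bnum_pos l hl T s hT hs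
    have := (rad_spec T s hT hs).1
    simp only [hk]; positivity
  have hkint : IntegrableOn k (Set.Ioi 0) := by
    refine Integrable.mono' (rep ta hta).1 ?_ ?_
    · apply Measurable.aestronglyMeasurable
      simp only [hk]; unfold Bnum rad
      fun_prop
    · refine (ae_restrict_mem measurableSet_Ioi).mono fun s hs => ?_
      have hs' : 0 < s := hs
      rw [norm_of_nonneg (hkpos s hs).le]
      simp only [hk]
      obtain ⟨g0, g1, g2⟩ := rad_spec T s hT hs
      have hR : 0 < rad T s ^ l := pow_pos g0 l
      have hR1 : rad T s ^ l < 1 := pow_lt_one₀ g0.le g1 (by omega)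
      obtain ⟨d0, d1⟩ := hDle s ta hs
      have hB := Bnum_pos l hl T s hT hs
      refine mul_le_mul_of_nonneg_left ?_ (by positivity)
      rw [mul_div_assoc, div_eq_mul_inv (Bnum l T s)]
      refine mul_le_mul_of_nonneg_left ?_ hB.le
      calc rad T s ^ l / 8 ≤ 4⁻¹ := by linarith
        _ ≤ _ := inv_anti₀ d0 d1
  have hkI : 0 < ∫ s in Set.Ioi (0:ℝ), k s := by
    rw [setIntegral_pos_iff_support_of_nonneg_ae _ hkint]
    · have : Function.support k ∩ Set.Ioi 0 = Set.Ioi (0:ℝ) :=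
        Set.inter_eq_right.2 fun s hs => (hkpos s hs).ne'
      rw [this]; simp
    · exact (ae_restrict_mem measurableSet_Ioi).mono fun s hs => (hkpos s hs).le
  refine ⟨(∫ s in Set.Ioi (0:ℝ), k s) / K, by positivity, fun t1 t2 ht1 ht2 => ?_⟩
  obtain ⟨i1, v1⟩ := rep t1 ht1
  obtain ⟨i2, v2⟩ := rep t2 ht2
  have hle : ∫ s in Set.Ioi (0:ℝ), k s * (cos (2 * l * t1) - cos (2 * l * t2)) ^ 2 ≤
      ∫ s in Set.Ioi (0:ℝ), (s ^ (-β) * (Bnum l T s /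
        (1 + (rad T s ^ l) ^ 2 - 2 * rad T s ^ l * cos (2 * l * t1))) - s ^ (-β) * (Bnum l T s /
        (1 + (rad T s ^ l) ^ 2 - 2 * rad T s ^ l * cos (2 * l * t2))))
        * (cos (2 * l * t1) - cos (2 * l * t2)) := by
    refine setIntegral_mono_on (hkint.mul_const _) ((i1.sub i2).mul_const _) measurableSet_Ioi ?_
    intro s hs
    have hs' : 0 < s := hs
    obtain ⟨g0, g1, g2⟩ := rad_spec T s hT hs
    have hR : 0 < rad T s ^ l := pow_pos g0 l
    obtain ⟨d0, d1⟩ := hDle s t1 hs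
    obtain ⟨e0, e1⟩ := hDle s t2 hs
    have hB := Bnum_pos l hl T s hT hs
    simp only [hk]
    have hsb : 0 < s ^ (-β) := by positivity
    set R := rad T s ^ l
    set c1 := cos (2 * l * t1)
    set c2 := cos (2 * l * t2)
    have : (s ^ (-β) * (Bnum l T s / (1 + R ^ 2 - 2 * R * c1)) - s ^ (-β) * (Bnum l T s / (1 + R ^ 2 - 2 * R * c2)))
        * (c1 - c2) = (s ^ (-β) * Bnum l T s * R * (c1 - c2) ^ 2) *
          (2 * ((1 + R ^ 2 - 2 * R * c1) * (1 + R ^ 2 - 2 * R * c2))⁻¹) := by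
      have := d0.ne'
      have := e0.ne'
      rw [div_eq_mul_inv, div_eq_mul_inv, mul_inv]
      have q1 := mul_inv_cancel₀ d0.ne'
      have q2 := mul_inv_cancel₀ e0.ne'
      generalize hI1 : (1 + R ^ 2 - 2 * R * c1)⁻¹ = I1 at *
      generalize hI2 : (1 + R ^ 2 - 2 * R * c2)⁻¹ = I2 at *
      have : I1 - I2 = 2 * R * (c1 - c2) * (I1 * I2) := by
        linear_combination I2 * q1 - I1 * q2
      linear_combination s ^ (-β) * Bnum l T s * (c1 - c2) * this
    rw [this]
    have h16 : (16:ℝ)⁻¹ ≤ ((1 + R ^ 2 - 2 * R * c1) * (1 + R ^ 2 - 2 * R * c2))⁻¹ := by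
      apply inv_anti₀ (by positivity)
      nlinarith
    calc s ^ (-β) * (Bnum l T s * R / 8) * (c1 - c2) ^ 2
        = (s ^ (-β) * Bnum l T s * R * (c1 - c2) ^ 2) * (2 * 16⁻¹) := by ring
      _ ≤ _ := by
        apply mul_le_mul_of_nonneg_left _ (by positivity)
        linarith
  rw [integral_mul_const, integral_mul_const, integral_sub i1 i2, v1, v2] at hle
  rw [div_mul_eq_mul_div, div_le_iff₀ hK]
  linarith

open Filter Topology

lemma prod_deriv (f c : ℝ → ℝ) (f' c' t0 κ : ℝ) (hf : HasDerivAt f f' t0) (hc : HasDerivAt c c' t0)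
    (ev : ∀ᶠ t in 𝓝 t0, κ * (c t - c t0) ^ 2 ≤ (f t - f t0) * (c t - c t0)) :
    κ * c' ^ 2 ≤ f' * c' := by
  have h1 := hasDerivAt_iff_tendsto_slope.1 hf
  have h2 := hasDerivAt_iff_tendsto_slope.1 hc
  refine le_of_tendsto_of_tendsto ((h2.pow 2).const_mul κ) (h1.mul h2) ?_
  filter_upwards [ev.filter_mono nhdsWithin_le_nhds] with t ht
  simp only [slope, vsub_eq_sub, smul_eq_mul]
  calc κ * ((t - t0)⁻¹ * (c t - c t0)) ^ 2 = (t - t0)⁻¹ ^ 2 * (κ * (c t - c t0) ^ 2) := by ring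
    _ ≤ (t - t0)⁻¹ ^ 2 * ((f t - f t0) * (c t - c t0)) := by gcongr
    _ = _ := by ring

/-- folded sum of a function -/
noncomputable def foldS (l : ℕ) (F : ℝ → ℝ) (t : ℝ) : ℝ := ∑ j ∈ range l, F (j * (π / l) + t)

lemma foldS_periodic (l : ℕ) (hl : 2 ≤ l) (F : ℝ → ℝ) (hF : Function.Periodic F π) :
    Function.Periodic (foldS l F) (π / l) := by
  intro t
  have hl0 : (l : ℝ) ≠ 0 := by exact_mod_cast (by omega : l ≠ 0)
  unfold foldS
  have e : ∀ j ∈ range l, F (j * (π / l) + (t + π / l)) = F ((j + 1 : ℕ) * (π / l) + t) := by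
    intro j _
    congr 1
    push_cast
    ring
  rw [Finset.sum_congr rfl e]
  have h1 := Finset.sum_range_succ (fun j : ℕ => F (j * (π / l) + t)) l
  have h2 := Finset.sum_range_succ' (fun j : ℕ => F (j * (π / l) + t)) l
  have h3 : F (l * (π / l) + t) = F ((0 : ℕ) * (π / l) + t) := by
    rw [mul_div_cancel₀ _ hl0, add_comm, hF]; simp
  simp only [h3] at h1
  rw [h1] at h2
  linarith

lemma foldS_even (l : ℕ) (hl : 2 ≤ l) (F : ℝ → ℝ) (hF : Function.Periodic F π)
    (hE : ∀ u, F (-u) = F u) (t : ℝ) : foldS l F (-t) = foldS l F t := by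
  have hl0 : (l : ℝ) ≠ 0 := by exact_mod_cast (by omega : l ≠ 0)
  rw [← foldS_periodic l hl F hF t]
  unfold foldS
  rw [← Finset.sum_range_reflect]
  refine Finset.sum_congr rfl fun j hj => ?_
  have hj' := Finset.mem_range.1 hj
  rw [← hE, ← hF]
  congr 1
  have : ((l - 1 - j : ℕ) : ℝ) = l - 1 - j := by
    rw [Nat.cast_sub (by omega), Nat.cast_sub (by omega)]; simp
  rw [this]
  field_simp
  ring

lemma sum_Icc_fold (l : ℕ) (hl : 2 ≤ l) (F : ℝ → ℝ) (hF : Function.Periodic F π)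
    (hE : ∀ u, F (-u) = F u) (t : ℝ) :
    ∑ j ∈ Finset.Icc 1 l, F ((j : ℝ) * π / l - t) = foldS l F t := by
  rw [← foldS_even l hl F hF hE, ← foldS_periodic l hl F hF (-t)]
  unfold foldS
  have e : Finset.Icc 1 l = Finset.Ico (0 + 1) (l + 1) := by
    ext j; simp only [Finset.mem_Icc, Finset.mem_Ico]; omega
  rw [e, ← Finset.sum_Ico_add' (fun j : ℕ => F ((j : ℝ) * π / l - t)) 0 l 1, Finset.range_eq_Ico]
  refine Finset.sum_congr rfl fun j _ => ?_
  congr 1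
  push_cast
  ring

lemma foldS_shift (l : ℕ) (hl : 2 ≤ l) (F : ℝ → ℝ) (hF : Function.Periodic F π) (k : ℤ) (t : ℝ) :
    foldS l F (t + k * (π / l)) = foldS l F t :=
  (foldS_periodic l hl F hF).int_mul k t

lemma F_per (β T : ℝ) : Function.Periodic (fun u => (sin u ^ 2 + T) ^ (-β)) π := by
  intro u; simp [sin_add_pi]

lemma F_even (β T : ℝ) (u : ℝ) :
    (fun u => (sin u ^ 2 + T) ^ (-β)) (-u) = (fun u => (sin u ^ 2 + T) ^ (-β)) u := by simp

lemma Gsum_eq (l : ℕ) (β T t : ℝ) : Gsum l β T t = foldS l (fun u => (sin u ^ 2 + T) ^ (-β)) t := rfl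

/-- constant part -/
noncomputable def Cst (l : ℕ) (α : ℝ) : ℝ :=
  ∑ j ∈ Finset.Icc 1 (l - 1), Real.sin ((j : ℝ) * Real.pi / l) ^ (-α)

lemma U_eq_s19 (l : ℕ) (hl : 2 ≤ l) (α θ φ : ℝ) : dihedralU l α θ φ =
    (2 * cos φ) ^ (-α) * (Cst l α + Gsum l (α / 2) (tan φ ^ 2) θ) := by
  unfold dihedralU
  rw [Gsum_eq, ← sum_Icc_fold l hl _ (F_per _ _) (F_even _ _)]
  simp only [neg_div]
  rfl

lemma sin_j_pos (l j : ℕ) (hj : j ∈ Finset.Icc 1 (l - 1)) : 0 < sin ((j : ℝ) * π / l) := by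
  obtain ⟨h1, h2⟩ := Finset.mem_Icc.1 hj
  have hl0 : (0 : ℝ) < l := by exact_mod_cast (by omega : 0 < l)
  have hj0 : (0 : ℝ) < j := by exact_mod_cast h1
  have hjl : (j : ℝ) < l := by exact_mod_cast (by omega : j < l)
  apply sin_pos_of_pos_of_lt_pi
  · positivity
  · rw [div_lt_iff₀ hl0]; nlinarith [pi_pos]

lemma Cst_pos (l : ℕ) (hl : 2 ≤ l) (α : ℝ) : 0 < Cst l α := by
  refine Finset.sum_pos (fun j hj => rpow_pos_of_pos (sin_j_pos l j hj) _) ⟨1, ?_⟩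
  rw [Finset.mem_Icc]; omega

lemma nonsing (l : ℕ) (hl : 2 ≤ l) (θ φ : ℝ) (hφ : φ ∈ Set.Ioo (-(π / 2)) (π / 2))
    (hnc : ¬(φ = 0 ∧ ∃ k : ℤ, θ = (k : ℝ) * (π / l))) :
    ∀ j ∈ range l, 0 < sin (j * (π / l) + θ) ^ 2 + tan φ ^ 2 := by
  intro j _
  have hl0 : (l : ℝ) ≠ 0 := by exact_mod_cast (by omega : l ≠ 0)
  by_contra hcon
  have h1 : sin (j * (π / l) + θ) = 0 := by
    have := sq_nonneg (sin (j * (π / l) + θ)); have := sq_nonneg (tan φ)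
    exact pow_eq_zero_iff two_ne_zero |>.1 (by linarith)
  have h2 : tan φ = 0 := by
    have := sq_nonneg (sin (j * (π / l) + θ)); have := sq_nonneg (tan φ)
    exact pow_eq_zero_iff two_ne_zero |>.1 (by linarith)
  refine hnc ⟨?_, ?_⟩
  · have hc : cos φ ≠ 0 := (cos_pos_of_mem_Ioo hφ).ne'
    rw [tan_eq_sin_div_cos, div_eq_zero_iff] at h2
    have hs : sin φ = 0 := by tauto
    rwa [sin_eq_zero_iff_of_lt_of_lt (by linarith [hφ.1, pi_pos]) (by linarith [hφ.2, pi_pos])] at hs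
  · obtain ⟨n, hn⟩ := sin_eq_zero_iff.1 h1
    refine ⟨n * l - j, ?_⟩
    push_cast
    field_simp
    field_simp at hn
    linarith

lemma theta_part (l : ℕ) (hl : 2 ≤ l) (β T A C θ : ℝ) (h0 : 0 < β) (h1 : β < 1) (hT : 0 ≤ T)
    (hA : 0 < A) (hns : ∀ j ∈ range l, 0 < sin (j * (π / l) + θ) ^ 2 + T)
    (f : ℝ → ℝ) (hf : ∀ t, f t = A * (C + Gsum l β T t)) (hd : deriv f θ = 0) :
    sin (2 * l * θ) = 0 ∧ deriv (deriv f) θ ≠ 0 := by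
  have hl0 : (0 : ℝ) < l := by exact_mod_cast (by omega : 0 < l)
  obtain ⟨κ, hκ, hk⟩ := kernel_ineq l hl β T h0 h1 hT θ hns
  have hev : ∀ t, (∀ j ∈ range l, 0 < sin (j * (π / l) + t) ^ 2 + T) →
      ∀ᶠ t' in 𝓝 t, ∀ j ∈ range l, 0 < sin (j * (π / l) + t') ^ 2 + T := by
    intro t ht
    rw [Filter.eventually_all_finset]
    intro j hj
    have hcont : Continuous fun t' : ℝ => sin (j * (π / l) + t') ^ 2 + T := by fun_prop
    exact hcont.continuousAt.eventually (lt_mem_nhds (ht j hj))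
  have hfe : f = fun t => A * (C + Gsum l β T t) := funext hf
  have hcd : ∀ t, (∀ j ∈ range l, 0 < sin (j * (π / l) + t) ^ 2 + T) → ContDiffAt ℝ 2 f t := by
    intro t ht
    rw [hfe]
    unfold Gsum
    refine contDiffAt_const.mul (contDiffAt_const.add (ContDiffAt.sum fun j hj => ?_))
    refine ContDiffAt.rpow_const_of_ne ?_ (ht j hj).ne'
    exact ContDiff.contDiffAt (by fun_prop)
  set c : ℝ → ℝ := fun t => cos (2 * l * t) with hc
  set c1 : ℝ → ℝ := fun t => -(2 * l * sin (2 * l * t)) with hc1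
  have hcD : ∀ t, HasDerivAt c (c1 t) t := by
    intro t
    have := (((hasDerivAt_id t).const_mul (2 * (l:ℝ))).cos)
    refine HasDerivAt.congr_deriv this ?_
    simp only [hc1, id]; ring
  have hc1D : ∀ t, HasDerivAt c1 (-((2 * l) ^ 2 * cos (2 * l * t))) t := by
    intro t
    have := ((((hasDerivAt_id t).const_mul (2 * (l:ℝ))).sin).const_mul (2 * (l:ℝ))).neg
    refine HasDerivAt.congr_deriv this ?_
    simp only [id]; ring
  have first : ∀ t, (∀ j ∈ range l, 0 < sin (j * (π / l) + t) ^ 2 + T) →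
      A * κ * c1 t ^ 2 ≤ deriv f t * c1 t := by
    intro t ht
    refine prod_deriv f c _ _ t _ ((hcd t ht).differentiableAt (by norm_num)).hasDerivAt (hcD t) ?_
    filter_upwards [hev t ht] with t' ht'
    have := hk t' t ht' ht
    simp only [hf, hc]
    calc _ = A * (κ * (cos (2 * l * t') - cos (2 * l * t)) ^ 2) := by ring
      _ ≤ A * _ := mul_le_mul_of_nonneg_left this hA.le
      _ = _ := by ring
  have hc10 : c1 θ = 0 := by
    have := first θ hns
    rw [hd, zero_mul] at this
    have hp : 0 < A * κ := by positivity
    by_contra hne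
    have : 0 < c1 θ ^ 2 := by positivity
    nlinarith
  have hs : sin (2 * l * θ) = 0 := by
    simp only [hc1, neg_eq_zero, mul_eq_zero] at hc10
    rcases hc10 with h | h
    · exfalso; rcases h with h | h <;> linarith
    · exact h
  refine ⟨hs, fun hdd => ?_⟩
  have hdiff : DifferentiableAt ℝ (deriv f) θ := by
    have : ContDiffAt ℝ 1 (deriv f) θ := by
      have h := hcd θ hns
      have h2 : ContDiffAt ℝ 1 (fderiv ℝ f) θ := h.fderiv_right (by norm_num)
      exact h2.clm_apply contDiffAt_const
    exact this.differentiableAt (by norm_num)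
  have second := prod_deriv (deriv f) c1 _ _ θ (A * κ) hdiff.hasDerivAt (hc1D θ) (by
    filter_upwards [hev θ hns] with t ht
    rw [hd, hc10, sub_zero, sub_zero]
    exact first t ht)
  rw [hdd, zero_mul] at second
  have hcos : cos (2 * l * θ) ^ 2 = 1 := by rw [cos_sq', hs]; norm_num
  have : (-((2 * l) ^ 2 * cos (2 * l * θ))) ^ 2 = (2 * (l:ℝ)) ^ 4 := by
    rw [neg_sq, mul_pow, hcos]; ring
  rw [this] at second
  have : 0 < A * κ * (2 * (l:ℝ)) ^ 4 := by positivity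
  linarith

lemma deriv_symm (g : ℝ → ℝ) (a : ℝ) (h : ∀ t, g (2 * a - t) = g t) : deriv g a = 0 := by
  have h1 := deriv_comp_const_sub (f := g) (2 * a) a
  have h2 : (fun t => g (2 * a - t)) = g := funext h
  rw [h2, show 2 * a - a = a by ring] at h1
  linarith

lemma U_symm (l : ℕ) (hl : 2 ≤ l) (α θ : ℝ) (hs : sin (2 * l * θ) = 0) (t p : ℝ) :
    dihedralU l α (2 * θ - t) p = dihedralU l α t p := by
  have hl0 : (l : ℝ) ≠ 0 := by exact_mod_cast (by omega : l ≠ 0)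
  obtain ⟨m, hm⟩ := sin_eq_zero_iff.1 hs
  rw [U_eq_s19 l hl, U_eq_s19 l hl, Gsum_eq, Gsum_eq]
  have : 2 * θ - t = -t + m * (π / l) := by
    field_simp
    linear_combination -hm
  rw [this, foldS_shift l hl _ (F_per _ _), foldS_even l hl _ (F_per _ _) (F_even _ _)]

lemma comp_cos (H H1 V : ℝ → ℝ) (H2 φ : ℝ) (hV : ∀ᶠ p in 𝓝 φ, V p = H (cos p ^ 2))
    (hH : ∀ᶠ x in 𝓝 (cos φ ^ 2), HasDerivAt H (H1 x) x) (hH1 : HasDerivAt H1 H2 (cos φ ^ 2)) :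
    deriv V φ = H1 (cos φ ^ 2) * (-(2 * cos φ * sin φ)) ∧
    deriv (deriv V) φ = H2 * (2 * cos φ * sin φ) ^ 2
      + H1 (cos φ ^ 2) * (2 * sin φ ^ 2 - 2 * cos φ ^ 2) := by
  have hx : ∀ p : ℝ, HasDerivAt (fun p => cos p ^ 2) (-(2 * cos p * sin p)) p := by
    intro p
    have := (hasDerivAt_cos p).pow 2
    refine HasDerivAt.congr_deriv this ?_
    simp
  have hcont : ContinuousAt (fun p : ℝ => cos p ^ 2) φ := (hx φ).continuousAt
  have hd : ∀ᶠ p in 𝓝 φ, deriv V p = H1 (cos p ^ 2) * (-(2 * cos p * sin p)) := by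
    filter_upwards [hV.eventually_nhds, hcont.eventually hH] with p hp hp2
    rw [Filter.EventuallyEq.deriv_eq (f := fun p => H (cos p ^ 2)) hp]
    exact (HasDerivAt.comp p hp2 (hx p)).deriv
  refine ⟨hd.self_of_nhds, ?_⟩
  rw [Filter.EventuallyEq.deriv_eq hd]
  have ha : HasDerivAt (fun p => H1 (cos p ^ 2)) (H2 * (-(2 * cos φ * sin φ))) φ :=
    HasDerivAt.comp φ hH1 (hx φ)
  have hb : HasDerivAt (fun p => -(2 * cos p * sin p)) (2 * sin φ ^ 2 - 2 * cos φ ^ 2) φ := by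
    have := (((hasDerivAt_cos φ).const_mul 2).mul (hasDerivAt_sin φ)).neg
    refine HasDerivAt.congr_deriv this ?_
    ring
  have := (ha.mul hb).deriv
  refine this.trans ?_
  ring

/-- potential in terms of `x = cos² φ` -/
noncomputable def Hf (l : ℕ) (C β θ x : ℝ) : ℝ :=
  C * x ^ (-β) + ∑ j ∈ range l, (1 - x * cos (j * (π / l) + θ) ^ 2) ^ (-β)

/-- its first derivative -/
noncomputable def Hf1 (l : ℕ) (C β θ x : ℝ) : ℝ :=
  C * (-β * x ^ (-β - 1)) + ∑ j ∈ range l, β * cos (j * (π / l) + θ) ^ 2 *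
    (1 - x * cos (j * (π / l) + θ) ^ 2) ^ (-β - 1)

/-- its second derivative -/
noncomputable def Hf2 (l : ℕ) (C β θ x : ℝ) : ℝ :=
  C * (β * (β + 1) * x ^ (-β - 2)) + ∑ j ∈ range l, β * (β + 1) * cos (j * (π / l) + θ) ^ 4 *
    (1 - x * cos (j * (π / l) + θ) ^ 2) ^ (-β - 2)

lemma pow_aux (c q x : ℝ) (h : 0 < 1 - x * c) :
    HasDerivAt (fun x => (1 - x * c) ^ q) (-c * q * (1 - x * c) ^ (q - 1)) x := by
  have h1 : HasDerivAt (fun x : ℝ => 1 - x * c) (-c) x := by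
    simpa using ((hasDerivAt_id x).mul_const c).const_sub 1
  exact h1.rpow_const (Or.inl h.ne')

lemma Hf_deriv (l : ℕ) (C β θ x : ℝ) (hx : 0 < x)
    (h : ∀ j ∈ range l, 0 < 1 - x * cos (j * (π / l) + θ) ^ 2) :
    HasDerivAt (Hf l C β θ) (Hf1 l C β θ x) x := by
  unfold Hf Hf1
  refine HasDerivAt.add ((Real.hasDerivAt_rpow_const (Or.inl hx.ne')).const_mul C) ?_
  refine HasDerivAt.fun_sum fun j hj => ?_
  refine HasDerivAt.congr_deriv (pow_aux _ (-β) x (h j hj)) ?_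
  ring

lemma Hf1_deriv (l : ℕ) (C β θ x : ℝ) (hx : 0 < x)
    (h : ∀ j ∈ range l, 0 < 1 - x * cos (j * (π / l) + θ) ^ 2) :
    HasDerivAt (Hf1 l C β θ) (Hf2 l C β θ x) x := by
  unfold Hf1 Hf2
  refine HasDerivAt.add ?_ ?_
  · have := ((Real.hasDerivAt_rpow_const (p := -β - 1) (Or.inl hx.ne')).const_mul (-β)).const_mul C
    refine HasDerivAt.congr_deriv this ?_
    rw [show -β - 1 - 1 = -β - 2 by ring]; ring
  · refine HasDerivAt.fun_sum fun j hj => ?_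
    refine HasDerivAt.congr_deriv ((pow_aux _ (-β - 1) x (h j hj)).const_mul (β * cos (j * (π / l) + θ) ^ 2)) ?_
    rw [show -β - 1 - 1 = -β - 2 by ring]; ring

lemma U_Hf (l : ℕ) (hl : 2 ≤ l) (α θ p : ℝ) (hp : 0 < cos p) :
    dihedralU l α θ p = 2 ^ (-α) * Hf l (Cst l α) (α / 2) θ (cos p ^ 2) := by
  rw [U_eq_s19 l hl]
  have e1 : (2 * cos p) ^ (-α) = 2 ^ (-α) * (cos p ^ 2) ^ (-(α / 2)) := by
    rw [mul_rpow (by norm_num) hp.le, ← Real.rpow_natCast, ← Real.rpow_mul hp.le]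
    congr 2; push_cast; ring
  rw [e1, mul_assoc]
  congr 1
  unfold Hf Gsum
  rw [mul_add, Finset.mul_sum]
  congr 1
  · ring
  · refine Finset.sum_congr rfl fun j _ => ?_
    rw [← mul_rpow (by positivity) (by positivity)]
    congr 1
    rw [tan_eq_sin_div_cos]
    field_simp
    rw [sin_sq, sin_sq p]
    ring

lemma Hf2_pos (l : ℕ) (C β θ x : ℝ) (hx : 0 < x) (hC : 0 < C) (hβ : 0 < β)
    (h : ∀ j ∈ range l, 0 < 1 - x * cos (j * (π / l) + θ) ^ 2) : 0 < Hf2 l C β θ x := by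
  unfold Hf2
  refine add_pos_of_pos_of_nonneg (by positivity) (Finset.sum_nonneg fun j hj => ?_)
  have := h j hj
  positivity

lemma Hf1_pos (l : ℕ) (hl : 2 ≤ l) (α θ : ℝ) (hα : 0 < α) (hs : sin (2 * l * θ) = 0)
    (hnc : ¬ ∃ k : ℤ, θ = (k : ℝ) * (π / l)) : 0 < Hf1 l (Cst l α) (α / 2) θ 1 := by
  have hl0 : (0 : ℝ) < l := by exact_mod_cast (by omega : 0 < l)
  have hl2 : (2 : ℝ) ≤ l := by exact_mod_cast hl
  obtain ⟨m, hm⟩ := sin_eq_zero_iff.1 hs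
  have hodd : Odd m := by
    rw [← Int.not_even_iff_odd]
    rintro ⟨k, rfl⟩
    refine hnc ⟨k, ?_⟩
    push_cast at hm
    field_simp
    linarith
  obtain ⟨k, rfl⟩ := hodd
  have hθ : θ = π / (2 * l) + k * (π / l) := by
    push_cast at hm
    field_simp
    linarith
  set F : ℝ → ℝ := fun u => cos u ^ 2 * (1 - 1 * cos u ^ 2) ^ (-(α / 2) - 1) with hF
  have hFp : Function.Periodic F π := by intro u; simp [hF, cos_add_pi]
  have hval : Hf1 l (Cst l α) (α / 2) θ 1 = α / 2 * (foldS l F (π / (2 * l)) - Cst l α) := by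
    rw [← foldS_shift l hl F hFp k, ← hθ]
    unfold Hf1 foldS
    rw [mul_sub, Finset.mul_sum, one_rpow]
    simp only [hF, mul_assoc]
    ring
  rw [hval]
  refine mul_pos (by positivity) (sub_pos.2 ?_)
  set s := sin (π / (2 * l)) with hsdef
  have hx0 : 0 < π / (2 * l) := by positivity
  have hxle : π / (2 * l) ≤ π / 4 := by
    apply div_le_div_of_nonneg_left pi_pos.le (by norm_num); linarith
  have hs0 : 0 < s := sin_pos_of_pos_of_lt_pi hx0 (by linarith [pi_pos])
  have hsx : s ≤ π / (2 * l) := sin_le hx0.le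
  have hs1 : s ≤ 1 := sin_le_one _
  have hsmall : (l + 1) * s ^ 2 < 2 := by
    have h1 : s ^ 2 ≤ (π / (2 * l)) ^ 2 := by gcongr
    have h2 : (π / (2 * l)) ^ 2 ≤ 2.5 / l ^ 2 := by
      rw [div_pow, div_le_div_iff₀ (by positivity) (by positivity)]
      have : π ^ 2 ≤ 10 := by nlinarith [pi_lt_d2, pi_pos]
      nlinarith [sq_nonneg (l:ℝ), mul_le_mul_of_nonneg_right this (sq_nonneg (l:ℝ))]
    calc (l + 1) * s ^ 2 ≤ (l + 1) * (2.5 / l ^ 2) := by gcongr; linarith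
      _ < 2 := by
        rw [← mul_div_assoc, div_lt_iff₀ (by positivity)]
        nlinarith
  -- upper bound for the constant
  have hC : Cst l α ≤ (l - 1) * s ^ (-α) := by
    have : ∀ j ∈ Finset.Icc 1 (l - 1), sin ((j : ℝ) * π / l) ^ (-α) ≤ s ^ (-α) := by
      intro j hj
      apply rpow_le_rpow_of_nonpos hs0 _ (by linarith)
      obtain ⟨j1, j2⟩ := Finset.mem_Icc.1 hj
      have hj1 : (1 : ℝ) ≤ j := by exact_mod_cast j1
      have hjl : (j : ℝ) + 1 ≤ l := by exact_mod_cast (by omega : j + 1 ≤ l)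
      have ha : π / (2 * l) ≤ j * π / l := by
        rw [div_le_div_iff₀ (by positivity) (by positivity)]
        have := mul_pos pi_pos hl0
        nlinarith
      have hb : π / (2 * l) ≤ π - j * π / l := by
        have : π - j * π / l = (l - j) * π / l := by field_simp
        rw [this, div_le_div_iff₀ (by positivity) (by positivity)]
        have := mul_pos pi_pos hl0
        nlinarith
      rcases le_total ((j:ℝ) * π / l) (π / 2) with h | h
      · exact sin_le_sin_of_le_of_le_pi_div_two (by linarith) h ha
      · rw [← sin_pi_sub ((j:ℝ) * π / l)]
        exact sin_le_sin_of_le_of_le_pi_div_two (by linarith) (by linarith) hb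
    have := Finset.sum_le_card_nsmul _ _ _ this
    rw [nsmul_eq_mul, Nat.card_Icc] at this
    have e : ((l - 1 + 1 - 1 : ℕ) : ℝ) = l - 1 := by
      rw [Nat.add_sub_cancel, Nat.cast_sub (by omega)]; simp
    rw [e] at this
    exact this
  have hFs : F (π / (2 * l)) = (1 - s ^ 2) / s ^ 2 * s ^ (-α) := by
    simp only [hF, one_mul]
    rw [cos_sq', ← hsdef, show 1 - (1 - s ^ 2) = s ^ 2 by ring, rpow_sub_one (by positivity),
      ← Real.rpow_natCast s 2, ← Real.rpow_mul hs0.le, show ((2:ℕ):ℝ) * -(α / 2) = -α by push_cast; ring]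
    ring
  have hfold : 2 * F (π / (2 * l)) ≤ foldS l F (π / (2 * l)) := by
    have hnn : ∀ u, 0 ≤ F u := by
      intro u
      simp only [hF, one_mul]
      have : 0 ≤ 1 - cos u ^ 2 := by nlinarith [sin_sq_add_cos_sq u, sq_nonneg (sin u)]
      positivity
    unfold foldS
    have hsub : ({0, l - 1} : Finset ℕ) ⊆ range l := by
      intro j hj
      simp only [Finset.mem_insert, Finset.mem_singleton] at hj
      rw [Finset.mem_range]; omega
    refine le_trans (le_of_eq ?_) (Finset.sum_le_sum_of_subset_of_nonneg hsub fun j _ _ => hnn _)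
    rw [Finset.sum_pair (by omega)]
    have e : (((l - 1 : ℕ) : ℝ) * (π / l) + π / (2 * l)) = -(π / (2 * l)) + π := by
      rw [Nat.cast_sub (by omega)]; push_cast; field_simp; ring
    rw [e, hFp]
    have : F (-(π / (2 * l))) = F (π / (2 * l)) := by simp [hF]
    rw [this]; simp; ring
  have hsa : 0 < s ^ (-α) := rpow_pos_of_pos hs0 _
  calc Cst l α ≤ (l - 1) * s ^ (-α) := hC
    _ < 2 * ((1 - s ^ 2) / s ^ 2) * s ^ (-α) := by
      apply mul_lt_mul_of_pos_right _ hsa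
      rw [← mul_div_assoc, lt_div_iff₀ (by positivity)]
      linarith
    _ = 2 * F (π / (2 * l)) := by rw [hFs]; ring
    _ ≤ _ := hfold

lemma phi_part (l : ℕ) (hl : 2 ≤ l) (α θ φ : ℝ) (hα : 0 < α)
    (hφ : φ ∈ Set.Ioo (-(π / 2)) (π / 2))
    (hnc : ¬(φ = 0 ∧ ∃ k : ℤ, θ = (k : ℝ) * (π / l))) (hs : sin (2 * l * θ) = 0)
    (h2 : deriv (fun p => dihedralU l α θ p) φ = 0) :
    deriv (deriv (fun p => dihedralU l α θ p)) φ ≠ 0 := by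
  have hc := cos_pos_of_mem_Ioo hφ
  have hns : ∀ j ∈ range l, 0 < 1 - cos φ ^ 2 * cos (j * (π / l) + θ) ^ 2 := by
    intro j hj
    have h := nonsing l hl θ φ hφ hnc j hj
    have e : 1 - cos φ ^ 2 * cos (j * (π / l) + θ) ^ 2
        = cos φ ^ 2 * (sin (j * (π / l) + θ) ^ 2 + tan φ ^ 2) := by
      rw [tan_eq_sin_div_cos]
      field_simp
      rw [sin_sq, sin_sq φ]
      ring
    rw [e]; positivity
  have hA : (0:ℝ) < 2 ^ (-α) := by positivity
  have hV : ∀ᶠ p in 𝓝 φ, dihedralU l α θ p = (fun x => 2 ^ (-α) * Hf l (Cst l α) (α / 2) θ x) (cos p ^ 2) := by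
    filter_upwards [continuous_cos.continuousAt.eventually (lt_mem_nhds hc)] with p hp
    exact U_Hf l hl α θ p hp
  have hx0 : 0 < cos φ ^ 2 := by positivity
  have hH : ∀ᶠ x in 𝓝 (cos φ ^ 2), HasDerivAt (fun x => 2 ^ (-α) * Hf l (Cst l α) (α / 2) θ x)
      ((fun x => 2 ^ (-α) * Hf1 l (Cst l α) (α / 2) θ x) x) x := by
    have hev : ∀ᶠ x in 𝓝 (cos φ ^ 2), ∀ j ∈ range l, 0 < 1 - x * cos (j * (π / l) + θ) ^ 2 := by
      rw [Filter.eventually_all_finset]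
      intro j hj
      have hcont : Continuous fun x : ℝ => 1 - x * cos (j * (π / l) + θ) ^ 2 := by fun_prop
      exact hcont.continuousAt.eventually (lt_mem_nhds (hns j hj))
    filter_upwards [hev, lt_mem_nhds hx0] with x h1 h3
    exact (Hf_deriv l _ _ θ x h3 h1).const_mul _
  have hH1 := (Hf1_deriv l (Cst l α) (α / 2) θ (cos φ ^ 2) hx0 hns).const_mul (2 ^ (-α))
  obtain ⟨d1, d2⟩ := comp_cos _ _ _ _ φ hV hH hH1
  rw [d2]
  rw [h2] at d1
  by_cases h0 : φ = 0
  · subst h0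
    have := Hf1_pos l hl α θ hα hs (fun h => hnc ⟨rfl, h⟩)
    simp only [cos_zero, sin_zero, one_pow]
    have := mul_pos hA this
    nlinarith
  · have hsn : sin φ ≠ 0 := by
      intro h
      rw [sin_eq_zero_iff_of_lt_of_lt (by linarith [hφ.1, pi_pos]) (by linarith [hφ.2, pi_pos])] at h
      exact h0 h
    have hne : -(2 * cos φ * sin φ) ≠ 0 := by simp [hsn, hc.ne']
    have hz := (mul_eq_zero.1 d1.symm).resolve_right hne
    rw [hz, zero_mul, add_zero]
    have hp := Hf2_pos l (Cst l α) (α / 2) θ (cos φ ^ 2) hx0 (Cst_pos l hl α) (by positivity) hns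
    have : 2 * cos φ * sin φ ≠ 0 := by simpa using hne
    positivity

lemma hyper (a b c d v β : ℝ) (hβ0 : 0 < β) (hβ1 : β < 1) (hv : v ≠ 0) (ha : a ≠ 0) (hd : d ≠ 0)
    (hb : b = 0) (hc : c = 0) (lam : ℂ)
    (h : Module.End.HasEigenvalue
          (Matrix.toLin'
            ((!![2 * β * v, 0, 0, 0, 0;
                 0, 0, 0, 1, 0;
                 0, 0, 0, 0, 1;
                 0, a, b, (β - 1) * v, 0;
                 0, c, d, 0, (β - 1) * v] :
                Matrix (Fin 5) (Fin 5) ℝ).map (Complex.ofReal ·)))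
          lam) : lam.re ≠ 0 := by
  subst hb hc
  intro hre
  obtain ⟨x, hx⟩ := h.exists_hasEigenvector
  have hne := hx.2
  have hx1 := hx.apply_eq_smul
  rw [Matrix.toLin'_apply] at hx1
  have q : ∀ (κ : ℝ), κ ≠ 0 → ∀ y z : ℂ, z = lam * y → κ * y + ((β - 1) * v : ℝ) * z = lam * z → y = 0 := by
    intro κ hκ y z hz hq
    by_contra hy
    subst hz
    have h1 : (κ : ℂ) + ((β - 1) * v : ℝ) * lam = lam * lam := by
      apply mul_right_cancel₀ hy
      linear_combination hq
    have hr := congrArg Complex.re h1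
    have hi := congrArg Complex.im h1
    simp [hre] at hr hi
    have : lam.im = 0 := by
      rcases hi with (h | h) | h
      · linarith
      · exact absurd h hv
      · exact h
    rw [this] at hr
    simp at hr
    exact hκ hr
  have r0 := congrFun hx1 0
  have r1 := congrFun hx1 1
  have r2 := congrFun hx1 2
  have r3 := congrFun hx1 3
  have r4 := congrFun hx1 4
  simp [Matrix.mulVec, dotProduct, Fin.sum_univ_five] at r0 r1 r2 r3 r4
  have y1 : x 1 = 0 := q a ha _ _ r1 (by push_cast; linear_combination r3)
  have y2 : x 2 = 0 := q d hd _ _ r2 (by push_cast; linear_combination r4)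
  have y3 : x 3 = 0 := by rw [r1, y1, mul_zero]
  have y4 : x 4 = 0 := by rw [r2, y2, mul_zero]
  have y0 : x 0 = 0 := by
    rcases r0 with h | h
    · exfalso
      have := congrArg Complex.re h
      rw [hre] at this
      simp at this
      rcases this with h | h
      · linarith
      · exact hv h
    · exact h
  apply hne
  funext i
  fin_cases i <;> simp [y0, y1, y2, y3, y4]

theorem hessian_nonsingular_and_hyperbolicity (l : ℕ) (hl : 2 ≤ l)
    (α β : ℝ) (hα : α ∈ Set.Ioo (0 : ℝ) 2) (hβ : β = α / 2)
    (θ φ : ℝ) (hφ : φ ∈ Set.Ioo (-(Real.pi / 2)) (Real.pi / 2))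
    (hnc : ¬(φ = 0 ∧ ∃ k : ℤ, θ = (k : ℝ) * (Real.pi / l)))
    (h1 : deriv (fun t => dihedralU l α t φ) θ = 0)
    (h2 : deriv (fun p => dihedralU l α θ p) φ = 0) :
    deriv (deriv (fun t => dihedralU l α t φ)) θ ≠ 0 ∧
    deriv (deriv (fun p => dihedralU l α θ p)) φ ≠ 0 ∧
    deriv (fun t => deriv (fun p => dihedralU l α t p) φ) θ = 0 ∧
    deriv (fun p => deriv (fun t => dihedralU l α t p) θ) φ = 0 ∧
    (!![deriv (deriv (fun t => dihedralU l α t φ)) θ,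
          deriv (fun t => deriv (fun p => dihedralU l α t p) φ) θ;
        deriv (fun p => deriv (fun t => dihedralU l α t p) θ) φ,
          deriv (deriv (fun p => dihedralU l α θ p)) φ] :
        Matrix (Fin 2) (Fin 2) ℝ).det ≠ 0 ∧
    ∀ v : ℝ, v ^ 2 = 2 * dihedralU l α θ φ →
      ∀ lam : ℂ,
        Module.End.HasEigenvalue
          (Matrix.toLin'
            ((!![2 * β * v, 0, 0, 0, 0;
                 0, 0, 0, 1, 0;
                 0, 0, 0, 0, 1;
                 0, (1 / Real.cos φ ^ 2) * deriv (deriv (fun t => dihedralU l α t φ)) θ,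
                   deriv (fun t => deriv (fun p => dihedralU l α t p) φ) θ, (β - 1) * v, 0;
                 0, deriv (fun p => deriv (fun t => dihedralU l α t p) θ) φ,
                   deriv (deriv (fun p => dihedralU l α θ p)) φ, 0, (β - 1) * v] :
                Matrix (Fin 5) (Fin 5) ℝ).map (Complex.ofReal ·)))
          lam →
        lam.re ≠ 0 := by
  obtain ⟨hα0, hα2⟩ := hα
  have hc := cos_pos_of_mem_Ioo hφ
  have hns := nonsing l hl θ φ hφ hnc
  obtain ⟨hs, htt⟩ := theta_part l hl (α / 2) (tan φ ^ 2) ((2 * cos φ) ^ (-α)) (Cst l α) θ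
    (by linarith) (by linarith) (by positivity) (by positivity) hns
    (fun t => dihedralU l α t φ) (fun t => U_eq_s19 l hl α t φ) h1
  have hpp := phi_part l hl α θ φ hα0 hφ hnc hs h2
  have hm1 : deriv (fun t => deriv (fun p => dihedralU l α t p) φ) θ = 0 := by
    apply deriv_symm
    intro t
    simp only [U_symm l hl α θ hs]
  have hm2 : deriv (fun p => deriv (fun t => dihedralU l α t p) θ) φ = 0 := by
    have : (fun p => deriv (fun t => dihedralU l α t p) θ) = fun _ => 0 := by
      funext p
      exact deriv_symm _ _ fun t => U_symm l hl α θ hs t p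
    rw [this]
    simp
  refine ⟨htt, hpp, hm1, hm2, ?_, ?_⟩
  · rw [Matrix.det_fin_two_of, hm1, zero_mul, sub_zero]
    exact mul_ne_zero htt hpp
  · intro v hv lam hlam
    have hU : 0 < dihedralU l α θ φ := by
      rw [U_eq_s19 l hl]
      have h3 := Cst_pos l hl α
      have h4 : 0 ≤ Gsum l (α / 2) (tan φ ^ 2) θ :=
        Finset.sum_nonneg fun j _ => by positivity
      positivity
    have hv0 : v ≠ 0 := by
      rintro rfl
      norm_num at hv
      linarith
    exact hyper _ _ _ _ v β (by linarith) (by linarith) hv0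
      (mul_ne_zero (by positivity) htt) hpp hm1 hm2 lam hlam
end
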